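/- arXiv:2503.23164 — 2 statements merged into one kernel-verified Lean document; each statement's English description precedes it below -/
import Mathlib

section
/- Fix δ > 0 and ε > 0. Then there exist C > 0, η > 0 and n₀ such that for all n ≥ n₀, all p ∈ [δ, 1−δ] and all k with k/n ∈ [δ, 1−δ], with probability at least 1 − exp(−n^η) over G = G_{n,p} the following holds: for every z ∈ ℝ and every r ≥ n^{3/4+ε}, P_S(e(S) ∈ [z, z+r]) ≤ C·r/n, where S is a uniformly random k-element subset of [n]. -/
/-!
Point probabilities of the integer-valued `e(S)` are controlled, by Fourier inversion, by the
integral of its characteristic function over `[0, π]`. A random `k`-set can be obtained by labelling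
two families of random pairs and some single vertices, and then choosing one member of each pair.
Given the labelling, only pairs of opposite families interact, so Cauchy–Schwarz in the choices of
the first family bounds the squared characteristic function by an explicit average `F θ` of products
over those pairs. The expectation of `F θ` over `G` is exact, since distinct pairs involve distinct
edges, and it is exponentially small for `θ ≥ 1 / √n`; Markov's inequality then bounds the integral
of `√F` over `[1 / √n, π]` for all but exponentially few `G`. For lower frequencies no further
randomness of `G` is needed: `F θ ^ 4 ≤ F (2 * θ)` propagates the bound downwards as Gaussian decay,
and the integral of `√F` over `[0, π]` is `O(1 / n)`.
-/

open Finset MeasureTheory ProbabilityTheory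

noncomputable section

/-- Uniform probability of an event `P` over a finite sample space `Ω`. -/
def Pru {α : Type*} (Ω : Finset α) (P : α → Prop) : ℝ := by
  classical exact ((Ω.filter P).card : ℝ) / Ω.card

/-- Expectation of `f` under the uniform distribution on `Ω`. -/
def Exu {α : Type*} (Ω : Finset α) (f : α → ℝ) : ℝ := (∑ a ∈ Ω, f a) / Ω.card

/-- Variance of `f` under the uniform distribution on `Ω`. -/
def Varu {α : Type*} (Ω : Finset α) (f : α → ℝ) : ℝ := Exu Ω (fun a => (f a - Exu Ω f) ^ 2)

/-- Conditional expectation of `f` given the value of `g`, under uniform distribution on `Ω`. -/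
def condExpU {α β : Type*} (Ω : Finset α) (f : α → ℝ) (g : α → β) (ω : α) : ℝ := by
  classical exact Exu (Ω.filter (fun ω' => g ω' = g ω)) f

/-- The edge set of the complete graph on `[n]`. -/
def completeEdges (n : ℕ) : Finset (Sym2 (Fin n)) := by
  classical exact Finset.univ.filter (fun e => ¬ e.IsDiag)

/-- A finset of `Sym2`s is a graph if it has no loops. -/
def IsGraph {n : ℕ} (G : Finset (Sym2 (Fin n))) : Prop := ∀ e ∈ G, ¬ e.IsDiag

/-- The sample space of `G_{n,M}`: all graphs on `[n]` with exactly `M` edges. -/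
def graphsM (n M : ℕ) : Finset (Finset (Sym2 (Fin n))) := by
  classical exact (completeEdges n).powerset.filter (fun G => G.card = M)

/-- `e(S)`: number of edges of `G` with both endpoints in `S`. -/
def edgesIn {n : ℕ} (G : Finset (Sym2 (Fin n))) (S : Finset (Fin n)) : ℕ := by
  classical exact (G.filter (fun e => ∀ v ∈ e, v ∈ S)).card

/-- `d_S(v)`: number of neighbours of `v` (in graph `G`) lying in `S`. -/
def dS {n : ℕ} (G : Finset (Sym2 (Fin n))) (S : Finset (Fin n)) (v : Fin n) : ℕ := by
  classical exact (S.filter (fun w => s(v, w) ∈ G)).card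

/-- All `k`-element subsets of `[n]`. -/
def kSets (n k : ℕ) : Finset (Finset (Fin n)) := Finset.univ.powersetCard k

/-- Probability of an event under the uniform random graph `G_{n,M}`. -/
def PrGnM (n M : ℕ) (P : Finset (Sym2 (Fin n)) → Prop) : ℝ := Pru (graphsM n M) P

/-- Probability of an event under the binomial random graph `G_{n,p}`. -/
def PrGnp (n : ℕ) (p : ℝ) (P : Finset (Sym2 (Fin n)) → Prop) : ℝ := by
  classical exact ∑ G ∈ (completeEdges n).powerset,
    if (P G) then p ^ G.card * (1 - p) ^ ((completeEdges n).card - G.card) else 0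

/-- `N = n(n-1)/2` as a real number. -/
def Nr (n : ℕ) : ℝ := (n : ℝ) * ((n : ℝ) - 1) / 2

/-- `K = k(k-1)/2` as a real number. -/
def Kr (k : ℕ) : ℝ := (k : ℝ) * ((k : ℝ) - 1) / 2

/-- `λ = ((n²-k²)k²/(2n⁴))·(M(N-M)/N²)`. -/
def lamP (n M k : ℕ) : ℝ :=
  (((n:ℝ)^2 - (k:ℝ)^2) * (k:ℝ)^2 / (2 * (n:ℝ)^4)) * ((M:ℝ) * (Nr n - (M:ℝ)) / (Nr n)^2)

/-- The mean `K·M/N`. -/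
def muP (n M k : ℕ) : ℝ := Kr k * (M:ℝ) / Nr n

/-- `W = (e(S) - K·M/N)/n`. -/
def Wfun (n M k : ℕ) (G : Finset (Sym2 (Fin n))) (S : Finset (Fin n)) : ℝ :=
  ((edgesIn G S : ℝ) - muP n M k) / n

/-- `V = Σ_v d(v)² - n·d(G)²`, i.e. `n` times the degree variance. -/
def Vdeg {n : ℕ} (G : Finset (Sym2 (Fin n))) : ℝ :=
  (∑ v : Fin n, (dS G Finset.univ v : ℝ) ^ 2) - (n:ℝ) * (2 * (G.card : ℝ) / n) ^ 2

/-- Gaussian CDF with mean `m` and variance `v`. -/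
def gaussCdf (m v z : ℝ) : ℝ := ((gaussianReal m v.toNNReal) (Set.Iic z)).toReal

/-- Gaussian measure of a set, mean `m`, variance `v`. -/
def gaussMeas (m v : ℝ) (A : Set ℝ) : ℝ := ((gaussianReal m v.toNNReal) A).toReal

/-- Gaussian density with mean `m` and variance `v`. -/
def gaussPdf (m v x : ℝ) : ℝ := gaussianPDFReal m v.toNNReal x

/-- `P(Y ∈ ·)` for `Y ~ Bin(ν, p)`. -/
def binomPr (ν : ℕ) (p : ℝ) (P : ℕ → Prop) : ℝ := by
  classical exact ∑ j ∈ Finset.range (ν + 1),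
    if (P j) then (ν.choose j : ℝ) * p ^ j * (1 - p) ^ (ν - j) else 0

/-- Sample space for "uniform `k`-set `S`, then uniform `x ∈ S` and `x̄ ∈ S̄`". -/
def SwapΩ (n k : ℕ) : Finset (Σ _ : Finset (Fin n), Fin n × Fin n) :=
  (kSets n k).sigma (fun S => S ×ˢ Sᶜ)

/-- A triple `(a, r, t)` is valid for `β`. -/
def ValidTriple (β : ℝ) (n a r t : ℕ) : Prop :=
  a ≤ r ∧
  (∃ c : ℝ, 1/2 ≤ c ∧ c ≤ 1 ∧ (a : ℝ) = c * (t:ℝ) ^ ((3:ℝ)/2) * (n:ℝ) ^ (2*β - 1/2)) ∧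
  (r : ℝ) ≤ (n:ℝ) ^ (-β) * Real.sqrt ((n:ℝ) * (t:ℝ))

open scoped BigOperators

/-! ### Averages and characteristic functions -/

section Fourier

variable {α : Type*}

lemma Pru_eq_expect (Ω : Finset α) (P : α → Prop) [DecidablePred P] :
    Pru Ω P = 𝔼 a ∈ Ω, if P a then (1 : ℝ) else 0 := by
  rw [Pru, expect_eq_sum_div_card, sum_boole]
  congr!

/-- The characteristic function of `f` under the uniform distribution on `Ω`. -/
def charFn (Ω : Finset α) (f : α → ℝ) (θ : ℝ) : ℂ :=
  𝔼 a ∈ Ω, Complex.exp (↑(θ * f a) * Complex.I)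

lemma continuous_charFn (Ω : Finset α) (f : α → ℝ) : Continuous (charFn Ω f) := by
  unfold charFn expect
  fun_prop

lemma integral_cos_mul_int (j : ℤ) :
    ∫ θ in (0 : ℝ)..Real.pi, Real.cos (θ * j) = if j = 0 then Real.pi else 0 := by
  split_ifs with hj
  · simp [hj]
  · rw [intervalIntegral.integral_comp_mul_right _ (Int.cast_ne_zero.2 hj), integral_cos,
      mul_comm Real.pi, Real.sin_int_mul_pi]
    simp

lemma expect_cos_le_norm_charFn (Ω : Finset α) (f : α → ℝ) (u θ : ℝ) :
    𝔼 a ∈ Ω, Real.cos (θ * (f a - u)) ≤ ‖charFn Ω f θ‖ := by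
  have hre : 𝔼 a ∈ Ω, Real.cos (θ * (f a - u))
      = (charFn Ω f θ * Complex.exp (↑(-(θ * u)) * Complex.I)).re := by
    simp_rw [charFn, expect_mul, ← Complex.exp_add, ← add_mul, ← Complex.ofReal_add,
      Complex.re_expect, Complex.exp_ofReal_mul_I_re, ← sub_eq_add_neg, mul_sub]
  calc 𝔼 a ∈ Ω, Real.cos (θ * (f a - u))
      ≤ ‖charFn Ω f θ * Complex.exp (↑(-(θ * u)) * Complex.I)‖ :=
        hre.trans_le (Complex.re_le_norm _)
    _ = ‖charFn Ω f θ‖ := by rw [norm_mul, Complex.norm_exp_ofReal_mul_I, mul_one]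

lemma Pru_eq_le_integral_norm_charFn (Ω : Finset α) (f : α → ℤ) (j : ℤ) :
    Pru Ω (fun a => f a = j)
      ≤ Real.pi⁻¹ * ∫ θ in (0 : ℝ)..Real.pi, ‖charFn Ω (fun a => f a) θ‖ := by
  have hind (a : α) : (if f a = j then (1 : ℝ) else 0)
      = Real.pi⁻¹ * ∫ θ in (0 : ℝ)..Real.pi, Real.cos (θ * (f a - j)) := by
    have h := integral_cos_mul_int (f a - j)
    push_cast at h
    simp only [h, sub_eq_zero]
    split_ifs <;> simp [Real.pi_ne_zero]
  have hswap : 𝔼 a ∈ Ω, ∫ θ in (0 : ℝ)..Real.pi, Real.cos (θ * (f a - j))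
      = ∫ θ in (0 : ℝ)..Real.pi, 𝔼 a ∈ Ω, Real.cos (θ * (f a - j)) := by
    simp_rw [expect_eq_sum_div_card]
    rw [intervalIntegral.integral_div, intervalIntegral.integral_finsetSum]
    exact fun a _ => (by fun_prop : Continuous _).intervalIntegrable _ _
  rw [Pru_eq_expect]
  simp_rw [hind, ← mul_expect, hswap]
  refine mul_le_mul_of_nonneg_left ?_ (by positivity)
  refine intervalIntegral.integral_mono_on Real.pi_pos.le ?_
    ((continuous_charFn _ _).norm.intervalIntegrable _ _)
    fun θ _ => expect_cos_le_norm_charFn Ω (fun a => (f a : ℝ)) j θ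
  unfold expect
  exact (by fun_prop : Continuous _).intervalIntegrable _ _

lemma Pru_mem_Icc_le (Ω : Finset α) (f : α → ℤ) {B : ℝ}
    (hf : ∀ j, Pru Ω (fun a => f a = j) ≤ B) (z : ℝ) {r : ℝ} (hr : 0 ≤ r) :
    Pru Ω (fun a => (f a : ℝ) ∈ Set.Icc z (z + r)) ≤ (r + 1) * B := by
  classical
  have hB : 0 ≤ B := le_trans (by unfold Pru; positivity) (hf 0)
  have hcard : (#(Icc ⌈z⌉ ⌊z + r⌋) : ℝ) ≤ r + 1 := by
    have hle : ⌈z⌉ ≤ ⌊z + r⌋ + 1 := by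
      rw [Int.ceil_le]
      push_cast
      linarith [Int.lt_floor_add_one (z + r)]
    have hcast : (#(Icc ⌈z⌉ ⌊z + r⌋) : ℝ) = ⌊z + r⌋ + 1 - ⌈z⌉ := by
      exact_mod_cast Int.card_Icc_of_le _ _ hle
    linarith [Int.floor_le (z + r), Int.le_ceil z]
  have hsum : Pru Ω (fun a => (f a : ℝ) ∈ Set.Icc z (z + r))
      = ∑ j ∈ Icc ⌈z⌉ ⌊z + r⌋, Pru Ω (fun a => f a = j) := by
    simp_rw [Pru_eq_expect, ← expect_sum_comm, sum_ite_eq, mem_Icc, Int.ceil_le, Int.le_floor,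
      Set.mem_Icc]
  rw [hsum]
  calc ∑ j ∈ Icc ⌈z⌉ ⌊z + r⌋, Pru Ω (fun a => f a = j)
      ≤ #(Icc ⌈z⌉ ⌊z + r⌋) • B := sum_le_card_nsmul _ _ _ fun j _ => hf j
    _ ≤ (r + 1) * B := by rw [nsmul_eq_mul]; gcongr

end Fourier

/-! ### Random subsets of given size -/

section RandomSubset

variable {α β M : Type*} [Fintype α] [AddCommMonoid M] [Module ℚ≥0 M]

lemma expect_perm_map [DecidableEq α] (f : Finset α → M) (T : Finset α) :
    𝔼 σ : Equiv.Perm α, f (T.map σ.toEmbedding) = 𝔼 S ∈ univ.powersetCard #T, f S := by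
  have hne : (univ.powersetCard #T : Finset (Finset α)).Nonempty :=
    ⟨T, mem_powersetCard_univ.2 rfl⟩
  have hperm (σ : Equiv.Perm α) :
      𝔼 S ∈ univ.powersetCard #T, f (S.map σ.toEmbedding) = 𝔼 S ∈ univ.powersetCard #T, f S :=
    expect_equiv (Equiv.finsetCongr σ) (by simp) fun _ _ => rfl
  have hset {S : Finset α} (hS : S ∈ univ.powersetCard #T) :
      𝔼 σ : Equiv.Perm α, f (S.map σ.toEmbedding)
        = 𝔼 σ : Equiv.Perm α, f (T.map σ.toEmbedding) := by
    obtain ⟨τ, rfl⟩ := Equiv.Perm.exists_map_finset_eq T S (mem_powersetCard_univ.1 hS).symm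
    exact Fintype.expect_equiv (Equiv.mulRight τ) _ _ fun σ => by rw [map_map]; rfl
  calc 𝔼 σ : Equiv.Perm α, f (T.map σ.toEmbedding)
      = 𝔼 S ∈ univ.powersetCard #T, 𝔼 σ : Equiv.Perm α, f (S.map σ.toEmbedding) := by
        rw [expect_congr rfl fun S hS => hset hS, expect_const hne]
    _ = 𝔼 S ∈ univ.powersetCard #T, f S := by
        rw [expect_comm]
        simp_rw [hperm]
        exact expect_const univ_nonempty _

lemma expect_embedding_map [Fintype β] [Nonempty (β ↪ α)] (f : Finset α → M)
    (T : Finset β) :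
    𝔼 φ : β ↪ α, f (T.map φ) = 𝔼 S ∈ univ.powersetCard #T, f S := by
  classical
  have hperm (σ : Equiv.Perm α) : 𝔼 φ : β ↪ α, f ((T.map φ).map σ.toEmbedding)
      = 𝔼 φ : β ↪ α, f (T.map φ) :=
    Fintype.expect_equiv (Equiv.embeddingCongr (Equiv.refl β) σ) _ _ fun φ => by
      rw [map_map]; rfl
  calc 𝔼 φ : β ↪ α, f (T.map φ)
      = 𝔼 σ : Equiv.Perm α, 𝔼 φ : β ↪ α, f ((T.map φ).map σ.toEmbedding) := by
        simp_rw [hperm]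
        exact (expect_const univ_nonempty _).symm
    _ = 𝔼 S ∈ univ.powersetCard #T, f S := by
        rw [expect_comm]
        simp_rw [expect_perm_map, card_map]
        exact expect_const univ_nonempty _

end RandomSubset

/-! ### Edges inside a random transversal of pairs -/

section Selection

variable {n m l : ℕ}

/-- The indicator that `u` and `v` are adjacent in `G`. -/
def adj (G : Finset (Sym2 (Fin n))) (u v : Fin n) : ℝ := if s(u, v) ∈ G then 1 else 0

lemma edgesIn_eq_card_inter (G : Finset (Sym2 (Fin n))) (S : Finset (Fin n)) :
    edgesIn G S = #(G ∩ S.sym2) := by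
  rw [edgesIn, ← filter_mem_eq_inter]
  congr!
  exact mem_sym2_iff.symm

lemma sum_adj_eq_card (G : Finset (Sym2 (Fin n))) {A B : Finset (Fin n)} (hAB : Disjoint A B) :
    ∑ a ∈ A, ∑ b ∈ B, adj G a b = #(G ∩ (A ×ˢ B).image fun v => s(v.1, v.2)) := by
  have hinj : Set.InjOn (fun v : Fin n × Fin n => s(v.1, v.2)) (A ×ˢ B : Finset _) := by
    rintro ⟨a, b⟩ hab ⟨a', b'⟩ hab' h
    simp only [coe_product, Set.mem_prod, mem_coe] at hab hab'
    rcases Sym2.eq_iff.1 h with ⟨rfl, rfl⟩ | ⟨rfl, rfl⟩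
    · rfl
    · exact (disjoint_left.1 hAB hab.1 hab'.2).elim
  simp_rw [← sum_product', adj]
  rw [sum_boole, inter_comm, ← filter_mem_eq_inter, filter_image,
    card_image_of_injOn (hinj.mono (filter_subset _ _))]

lemma edgesIn_union_union (G : Finset (Sym2 (Fin n))) {A B F : Finset (Fin n)}
    (hAB : Disjoint A B) (hAF : Disjoint A F) (hBF : Disjoint B F) :
    (edgesIn G (A ∪ B ∪ F) : ℝ) = edgesIn G (A ∪ F) + (edgesIn G (B ∪ F) - edgesIn G F)
      + ∑ a ∈ A, ∑ b ∈ B, adj G a b := by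
  rw [disjoint_left] at hAF hBF
  have hBA := disjoint_right.1 hAB
  set X := (A ×ˢ B).image fun v => s(v.1, v.2)
  have hunion : G ∩ (A ∪ B ∪ F).sym2 = (G ∩ (A ∪ F).sym2 ∪ G ∩ (B ∪ F).sym2) ∪ G ∩ X := by
    ext e
    induction e with
    | _ u v =>
      simp only [X, mem_inter, mem_union, mk_mem_sym2_iff, mem_image, mem_product, Prod.exists,
        Sym2.eq_iff]
      grind
  have hinter : G ∩ (A ∪ F).sym2 ∩ (G ∩ (B ∪ F).sym2) = G ∩ F.sym2 := by
    ext e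
    induction e with
    | _ u v =>
      simp only [mem_inter, mk_mem_sym2_iff, mem_union]
      grind
  have hdisj : Disjoint (G ∩ (A ∪ F).sym2 ∪ G ∩ (B ∪ F).sym2) (G ∩ X) := by
    rw [disjoint_left]
    intro e
    induction e with
    | _ u v =>
      simp only [X, mem_inter, mem_union, mk_mem_sym2_iff, mem_image, mem_product, Prod.exists,
        Sym2.eq_iff]
      grind
  have hcard := card_union_add_card_inter (G ∩ (A ∪ F).sym2) (G ∩ (B ∪ F).sym2)
  simp_rw [edgesIn_eq_card_inter, sum_adj_eq_card G hAB, hunion, card_union_of_disjoint hdisj,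
    ← hinter]
  rw [← @Nat.cast_inj ℝ] at hcard
  push_cast at hcard ⊢
  linarith

/-- Labels for the vertices of two families of `m` pairs, the pair being indexed by `Fin m` and its
two members by `Bool`, and of `l` single vertices. -/
abbrev Label (m l : ℕ) : Type := (Fin m × Bool) ⊕ (Fin m × Bool) ⊕ Fin l

/-- The transversal of the pairs `{(i, false), (i, true)}` chosen by `x`. -/
def transversal (x : Fin m → Bool) : Finset (Fin m × Bool) :=
  univ.map ⟨fun i => (i, x i), fun _ _ h => congrArg Prod.fst h⟩

/-- The labels selected by `x` in the first family of pairs and by `y` in the second one, together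
with all the single labels. -/
def selection (l : ℕ) (x y : Fin m → Bool) : Finset (Label m l) :=
  (transversal x).disjSum ((transversal y).disjSum univ)

lemma card_selection (l : ℕ) (x y : Fin m → Bool) : #(selection l x y) = 2 * m + l := by
  simp only [selection, transversal, card_disjSum, card_map, card_univ, Fintype.card_fin]
  ring

/-- Once `G` and the labelling `φ` are fixed, only the pairs of opposite families interact. -/
lemma exists_edgesIn_map_selection (G : Finset (Sym2 (Fin n))) (φ : Label m l ↪ Fin n) :
    ∃ P R : (Fin m → Bool) → ℝ, ∀ x y, (edgesIn G ((selection l x y).map φ) : ℝ)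
      = P x + R y + ∑ i, ∑ j, adj G (φ (.inl (i, x i))) (φ (.inr (.inl (j, y j)))) := by
  let A (x : Fin m → Bool) := (transversal x).map (.trans .inl φ)
  let B (y : Fin m → Bool) := (transversal y).map (.trans (.trans .inl .inr) φ)
  let F := (univ : Finset (Fin l)).map (.trans (.trans .inr .inr) φ)
  have hunion (x y : Fin m → Bool) : (selection l x y).map φ = A x ∪ B y ∪ F := by
    ext v
    simp [selection, A, B, F]
  refine ⟨fun x => edgesIn G (A x ∪ F), fun y => edgesIn G (B y ∪ F) - edgesIn G F,
    fun x y => ?_⟩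
  rw [hunion, edgesIn_union_union G]
  · simp only [A, B, transversal, sum_map]
    rfl
  all_goals simp [A, B, F, transversal, disjoint_left]

end Selection

/-! ### Decoupling -/

section Decoupling

lemma norm_exp_mul_I_add_exp_mul_I (a b : ℝ) :
    ‖Complex.exp (a * Complex.I) + Complex.exp (b * Complex.I)‖ = 2 * |Real.cos ((a - b) / 2)| := by
  have h : Complex.exp (a * Complex.I) + Complex.exp (b * Complex.I)
      = Complex.exp (((a + b) / 2 : ℝ) * Complex.I) * ((2 * Real.cos ((a - b) / 2) : ℝ) : ℂ) := by
    push_cast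
    rw [Complex.cos, mul_div_cancel₀ _ two_ne_zero, mul_add, ← Complex.exp_add, ← Complex.exp_add]
    congr 2 <;> ring
  rw [h, norm_mul, Complex.norm_exp_ofReal_mul_I, one_mul, Complex.norm_real, Real.norm_eq_abs,
    abs_mul, abs_two]

lemma pow_expect_le_expect_pow {ι : Type*} {s : Finset ι} {f : ι → ℝ} (hf : ∀ i ∈ s, 0 ≤ f i)
    (k : ℕ) : (𝔼 i ∈ s, f i) ^ (k + 1) ≤ 𝔼 i ∈ s, f i ^ (k + 1) := by
  rcases s.eq_empty_or_nonempty with rfl | hs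
  · simp
  · rw [expect_eq_sum_div_card, expect_eq_sum_div_card, div_pow, pow_succ (#s : ℝ), ← div_div]
    gcongr
    exact pow_sum_div_card_le_sum_pow hf k

lemma norm_sq_expect_le {ι : Type*} [Fintype ι] (f : ι → ℂ) :
    ‖𝔼 i, f i‖ ^ 2 ≤ 𝔼 i, ‖f i‖ ^ 2 :=
  (pow_le_pow_left₀ (norm_nonneg _) (RCLike.norm_expect_le (K := ℂ)) 2).trans
    (pow_expect_le_expect_pow (fun _ _ => norm_nonneg _) 1)

lemma norm_sq_expect_eq {ι : Type*} [Fintype ι] (f : ι → ℂ) :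
    ((‖𝔼 i, f i‖ ^ 2 : ℝ) : ℂ) = 𝔼 i, 𝔼 j, f i * starRingEnd ℂ (f j) := by
  rw [Complex.ofReal_pow, ← Complex.mul_conj', map_expect, expect_mul_expect]

/-- Cauchy–Schwarz in `x` removes the parts `P` and `R` of the phase that depend on one variable
only. -/
lemma norm_sq_expect_exp_le {X Y : Type*} [Fintype X] [Fintype Y]
    (P : X → ℝ) (R : Y → ℝ) (B : X → Y → ℝ) :
    ‖𝔼 x, 𝔼 y, Complex.exp (↑(P x + R y + B x y) * Complex.I)‖ ^ 2
      ≤ 𝔼 y, 𝔼 y', ‖𝔼 x, Complex.exp (↑(B x y - B x y') * Complex.I)‖ := by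
  have hP (x : X) : ‖𝔼 y, Complex.exp (↑(P x + R y + B x y) * Complex.I)‖
      = ‖𝔼 y, Complex.exp (↑(R y + B x y) * Complex.I)‖ := by
    simp_rw [add_assoc, Complex.ofReal_add (P x), add_mul (P x : ℂ), Complex.exp_add, ← mul_expect,
      norm_mul, Complex.norm_exp_ofReal_mul_I, one_mul]
  have hphase (x : X) (y y' : Y) : Complex.exp (↑(R y + B x y) * Complex.I)
        * starRingEnd ℂ (Complex.exp (↑(R y' + B x y') * Complex.I))
      = Complex.exp (↑(R y - R y') * Complex.I) * Complex.exp (↑(B x y - B x y') * Complex.I) := by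
    rw [← Complex.exp_conj, ← Complex.exp_add, ← Complex.exp_add, map_mul, Complex.conj_ofReal,
      Complex.conj_I]
    congr 1
    push_cast
    ring
  have hexpand : ((𝔼 x, ‖𝔼 y, Complex.exp (↑(R y + B x y) * Complex.I)‖ ^ 2 : ℝ) : ℂ)
      = 𝔼 y, 𝔼 y', Complex.exp (↑(R y - R y') * Complex.I)
          * 𝔼 x, Complex.exp (↑(B x y - B x y') * Complex.I) := by
    rw [Complex.ofReal_expect]
    simp_rw [norm_sq_expect_eq, hphase, mul_expect]
    rw [expect_comm]
    exact expect_congr rfl fun y _ => expect_comm _ _ _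
  calc ‖𝔼 x, 𝔼 y, Complex.exp (↑(P x + R y + B x y) * Complex.I)‖ ^ 2
      ≤ 𝔼 x, ‖𝔼 y, Complex.exp (↑(R y + B x y) * Complex.I)‖ ^ 2 := by
        simpa only [hP] using norm_sq_expect_le fun x =>
          𝔼 y, Complex.exp (↑(P x + R y + B x y) * Complex.I)
    _ = ‖((𝔼 x, ‖𝔼 y, Complex.exp (↑(R y + B x y) * Complex.I)‖ ^ 2 : ℝ) : ℂ)‖ := by
        rw [Complex.norm_of_nonneg (expect_nonneg fun _ _ => by positivity)]
    _ ≤ 𝔼 y, 𝔼 y', ‖𝔼 x, Complex.exp (↑(B x y - B x y') * Complex.I)‖ := by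
        rw [hexpand]
        refine (RCLike.norm_expect_le (K := ℂ)).trans (expect_le_expect fun y _ => ?_)
        refine (RCLike.norm_expect_le (K := ℂ)).trans (expect_le_expect fun y' _ => ?_)
        rw [norm_mul, Complex.norm_exp_ofReal_mul_I, one_mul]

lemma expect_pi_prod {ι κ K : Type*} [Fintype ι] [DecidableEq ι] [Fintype κ] [Semifield K]
    [CharZero K] (g : ι → κ → K) :
    𝔼 x : ι → κ, ∏ i, g i (x i) = ∏ i, 𝔼 b, g i b := by
  simp_rw [Fintype.expect_eq_sum_div_card, prod_div_distrib, prod_univ_sum, Fintype.piFinset_univ,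
    Fintype.card_fun, prod_const, card_univ, Nat.cast_pow]

lemma norm_expect_exp_sum {ι : Type*} [Fintype ι] [DecidableEq ι] (g : ι → Bool → ℝ) :
    ‖𝔼 x : ι → Bool, Complex.exp (↑(∑ i, g i (x i)) * Complex.I)‖
      = ∏ i, |Real.cos ((g i true - g i false) / 2)| := by
  simp_rw [Complex.ofReal_sum, sum_mul, Complex.exp_sum,
    expect_pi_prod fun i b => Complex.exp (g i b * Complex.I), norm_prod]
  refine prod_congr rfl fun i _ => ?_
  rw [Fintype.expect_eq_sum_div_card, Fintype.sum_bool, Fintype.card_bool, norm_div,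
    norm_exp_mul_I_add_exp_mul_I]
  simp

end Decoupling

section SwitchEffect

variable {n m l : ℕ}

/-- The coefficient of the pair of labels `(i, t.1)`, `t.2` in `switchEffect`; it does not depend on
`i`. -/
def switchCoeff (y y' : Fin m → Bool) (t : Bool × Fin m × Bool) : ℝ :=
  (bif t.1 then 1 else -1) *
    ((if t.2.2 = y t.2.1 then 1 else 0) - (if t.2.2 = y' t.2.1 then 1 else 0))

/-- For a labelling `φ`, the change, when the choice in the `i`-th pair of the first family is
switched, of the difference between the numbers of edges to the two transversals `y` and `y'` of the
second family. -/
def switchEffect (φ : Label m l ↪ Fin n) (y y' : Fin m → Bool) (G : Finset (Sym2 (Fin n)))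
    (i : Fin m) : ℝ :=
  ∑ t : Bool × Fin m × Bool, switchCoeff y y' t * adj G (φ (.inl (i, t.1))) (φ (.inr (.inl t.2)))

lemma switchEffect_eq_sub (φ : Label m l ↪ Fin n) (y y' : Fin m → Bool)
    (G : Finset (Sym2 (Fin n))) (i : Fin m) :
    switchEffect φ y y' G i
      = ∑ j, (adj G (φ (.inl (i, true))) (φ (.inr (.inl (j, y j))))
          - adj G (φ (.inl (i, true))) (φ (.inr (.inl (j, y' j)))))
        - ∑ j, (adj G (φ (.inl (i, false))) (φ (.inr (.inl (j, y j))))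
          - adj G (φ (.inl (i, false))) (φ (.inr (.inl (j, y' j))))) := by
  simp only [switchEffect, switchCoeff, Fintype.sum_prod_type, Fintype.sum_bool, cond_true,
    cond_false, ← sum_sub_distrib, ← sum_add_distrib]
  refine sum_congr rfl fun j _ => ?_
  cases y j <;> cases y' j <;> simp <;> ring

/-- The characteristic function of the step of a lazy walk on `ℤ`, which stays with probability
`3/4`. -/
def lazyCos (u : ℝ) : ℝ := (3 + Real.cos u) / 4

lemma lazyCos_nonneg (u : ℝ) : 0 ≤ lazyCos u := by
  rw [lazyCos]
  linarith [Real.neg_one_le_cos u]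

lemma lazyCos_le_one (u : ℝ) : lazyCos u ≤ 1 := by
  rw [lazyCos]
  linarith [Real.cos_le_one u]

lemma lazyCos_pow_four_le (u : ℝ) : lazyCos u ^ 4 ≤ lazyCos (2 * u) := by
  have hfactor : lazyCos (2 * u) - lazyCos u ^ 4
      = (1 - Real.cos u) ^ 2 * (47 - 14 * Real.cos u - Real.cos u ^ 2) / 256 := by
    rw [lazyCos, lazyCos, Real.cos_two_mul]
    ring
  have hpos : 0 ≤ 47 - 14 * Real.cos u - Real.cos u ^ 2 := by
    nlinarith [Real.neg_one_le_cos u, Real.cos_le_one u]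
  have : 0 ≤ lazyCos (2 * u) - lazyCos u ^ 4 := by
    rw [hfactor]
    positivity
  linarith

lemma abs_cos_half_le (u : ℝ) : |Real.cos (u / 2)| ≤ lazyCos u := by
  have hcos : Real.cos u = 2 * |Real.cos (u / 2)| ^ 2 - 1 := by
    rw [sq_abs, ← Real.cos_two_mul, mul_div_cancel₀ _ two_ne_zero]
  rw [lazyCos, hcos]
  nlinarith [sq_nonneg (|Real.cos (u / 2)| - 1)]

/-- A bound for the squared characteristic function of the number of edges of `G` inside a random
`(2m+l)`-set (`norm_sq_charFn_le`): the average over a random labelling `φ` and two random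
transversals `y`, `y'`. -/
def decoupledBound (m l : ℕ) (G : Finset (Sym2 (Fin n))) (θ : ℝ) : ℝ :=
  𝔼 ω : (Label m l ↪ Fin n) × (Fin m → Bool) × (Fin m → Bool),
    ∏ i, lazyCos (θ * switchEffect ω.1 ω.2.1 ω.2.2 G i)

lemma norm_sq_expect_selection_le (G : Finset (Sym2 (Fin n))) (φ : Label m l ↪ Fin n) (θ : ℝ) :
    ‖𝔼 x, 𝔼 y, Complex.exp (↑(θ * (edgesIn G ((selection l x y).map φ) : ℝ)) * Complex.I)‖ ^ 2
      ≤ 𝔼 y, 𝔼 y', ∏ i, lazyCos (θ * switchEffect φ y y' G i) := by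
  obtain ⟨P, R, hPR⟩ := exists_edgesIn_map_selection G φ
  simp_rw [hPR, mul_add]
  refine (norm_sq_expect_exp_le _ _ _).trans
    (expect_le_expect fun y _ => expect_le_expect fun y' _ => ?_)
  let g (i : Fin m) (b : Bool) : ℝ := θ * ∑ j, (adj G (φ (.inl (i, b))) (φ (.inr (.inl (j, y j))))
    - adj G (φ (.inl (i, b))) (φ (.inr (.inl (j, y' j)))))
  have hg (x : Fin m → Bool) :
      θ * ∑ i, ∑ j, adj G (φ (.inl (i, x i))) (φ (.inr (.inl (j, y j))))
        - θ * ∑ i, ∑ j, adj G (φ (.inl (i, x i))) (φ (.inr (.inl (j, y' j)))) = ∑ i, g i (x i) := by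
    simp only [g, ← mul_sum, sum_sub_distrib, mul_sub]
  simp_rw [hg, norm_expect_exp_sum, switchEffect_eq_sub, mul_sub θ]
  exact prod_le_prod (fun _ _ => abs_nonneg _) fun i _ => abs_cos_half_le _

lemma charFn_eq_expect_selection [Nonempty (Label m l ↪ Fin n)] (f : Finset (Fin n) → ℝ) (θ : ℝ) :
    charFn (kSets n (2 * m + l)) f θ = 𝔼 φ : Label m l ↪ Fin n, 𝔼 x : Fin m → Bool,
      𝔼 y : Fin m → Bool, Complex.exp (↑(θ * f ((selection l x y).map φ)) * Complex.I) := by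
  have hxy (x y : Fin m → Bool) :
      𝔼 φ : Label m l ↪ Fin n, Complex.exp (↑(θ * f ((selection l x y).map φ)) * Complex.I)
        = charFn (kSets n (2 * m + l)) f θ := by
    rw [expect_embedding_map (fun S => Complex.exp (↑(θ * f S) * Complex.I)), card_selection,
      charFn, kSets]
  rw [expect_comm]
  simp_rw [expect_comm (univ : Finset (Label m l ↪ Fin n)), hxy, Fintype.expect_const]

lemma norm_sq_charFn_le [Nonempty (Label m l ↪ Fin n)] (G : Finset (Sym2 (Fin n))) (θ : ℝ) :
    ‖charFn (kSets n (2 * m + l)) (fun S => edgesIn G S) θ‖ ^ 2 ≤ decoupledBound m l G θ := by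
  rw [charFn_eq_expect_selection]
  refine (norm_sq_expect_le _).trans ?_
  simp_rw [decoupledBound, ← univ_product_univ, expect_product]
  exact expect_le_expect fun φ _ => norm_sq_expect_selection_le G φ θ

lemma continuous_decoupledBound (G : Finset (Sym2 (Fin n))) :
    Continuous (decoupledBound m l G) := by
  unfold decoupledBound lazyCos
  simp_rw [Fintype.expect_eq_sum_div_card]
  fun_prop

lemma decoupledBound_nonneg (G : Finset (Sym2 (Fin n))) (θ : ℝ) : 0 ≤ decoupledBound m l G θ :=
  expect_nonneg fun _ _ => prod_nonneg fun _ _ => lazyCos_nonneg _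

lemma decoupledBound_le_one [Nonempty (Label m l ↪ Fin n)] (G : Finset (Sym2 (Fin n))) (θ : ℝ) :
    decoupledBound m l G θ ≤ 1 :=
  expect_le univ_nonempty fun _ _ =>
    prod_le_one (fun _ _ => lazyCos_nonneg _) fun _ _ => lazyCos_le_one _

lemma decoupledBound_pow_four_le (G : Finset (Sym2 (Fin n))) (θ : ℝ) :
    decoupledBound m l G θ ^ 4 ≤ decoupledBound m l G (2 * θ) := by
  refine (pow_expect_le_expect_pow
    (fun _ _ => prod_nonneg fun _ _ => lazyCos_nonneg _) 3).trans (expect_le_expect fun ω _ => ?_)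
  rw [← prod_pow]
  refine prod_le_prod (fun _ _ => pow_nonneg (lazyCos_nonneg _) _) fun i _ => ?_
  rw [mul_assoc]
  exact lazyCos_pow_four_le _

end SwitchEffect

/-! ### Expectations over the binomial random graph -/

section BinomExp

variable {α V : Type*} [AddCommGroup V] [Module ℝ V]

/-- The expectation of `F` at a random subset of `E` that contains each element of `E` independently
with probability `p`. -/
def binomExp (E : Finset α) (p : ℝ) (F : Finset α → V) : V :=
  ∑ G ∈ E.powerset, (p ^ #G * (1 - p) ^ (#E - #G)) • F G

variable (E : Finset α) {p : ℝ}

lemma binomExp_sum {ι : Type*} (s : Finset ι) (F : ι → Finset α → V) :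
    binomExp E p (fun G => ∑ i ∈ s, F i G) = ∑ i ∈ s, binomExp E p (F i) := by
  simp only [binomExp, smul_sum]
  exact sum_comm

lemma binomExp_add (F F' : Finset α → V) :
    binomExp E p (fun G => F G + F' G) = binomExp E p F + binomExp E p F' := by
  simp only [binomExp, smul_add, sum_add_distrib]

lemma binomExp_smul {K : Type*} [Monoid K] [DistribMulAction K V] [SMulCommClass ℝ K V]
    (c : K) (F : Finset α → V) :
    binomExp E p (fun G => c • F G) = c • binomExp E p F := by
  simp only [binomExp, smul_sum, smul_comm _ c]

lemma binomExp_expect {ι : Type*} [Module ℚ≥0 V] (s : Finset ι) (F : ι → Finset α → V) :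
    binomExp E p (fun G => 𝔼 i ∈ s, F i G) = 𝔼 i ∈ s, binomExp E p (F i) := by
  simp only [expect, binomExp_smul, binomExp_sum]

lemma binomExp_mono (hp₀ : 0 ≤ p) (hp₁ : p ≤ 1) {F F' : Finset α → ℝ} (h : ∀ G, F G ≤ F' G) :
    binomExp E p F ≤ binomExp E p F' :=
  sum_le_sum fun G _ => smul_le_smul_of_nonneg_left (h G)
    (mul_nonneg (pow_nonneg hp₀ _) (pow_nonneg (sub_nonneg.2 hp₁) _))

lemma ofReal_binomExp (F : Finset α → ℝ) :
    ((binomExp E p F : ℝ) : ℂ) = binomExp E p fun G => (F G : ℂ) := by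
  simp [binomExp]

lemma binomExp_integral_le {a b B : ℝ} (hab : a ≤ b) {F : Finset α → ℝ → ℝ}
    (hF : ∀ G, Continuous (F G)) (hB : ∀ θ ∈ Set.Icc a b, binomExp E p (fun G => F G θ) ≤ B) :
    binomExp E p (fun G => ∫ θ in a..b, F G θ) ≤ (b - a) * B := by
  have hcont : Continuous fun θ => binomExp E p fun G => F G θ := by
    unfold binomExp
    fun_prop
  calc binomExp E p (fun G => ∫ θ in a..b, F G θ)
      = ∫ θ in a..b, binomExp E p fun G => F G θ := by
        simp_rw [binomExp, ← intervalIntegral.integral_smul]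
        exact (intervalIntegral.integral_finsetSum fun G _ =>
          ((hF G).intervalIntegrable a b).const_mul _).symm
    _ ≤ ∫ _ in a..b, B := intervalIntegral.integral_mono_on hab (hcont.intervalIntegrable a b)
        (continuous_const.intervalIntegrable a b) hB
    _ = (b - a) * B := by rw [intervalIntegral.integral_const, smul_eq_mul]

lemma binomExp_prod (f : α → ℂ) :
    binomExp E p (fun G => ∏ e ∈ G, f e) = ∏ e ∈ E, (p * f e + (1 - p)) := by
  classical
  rw [prod_add, binomExp]
  refine sum_congr rfl fun G hG => ?_
  rw [prod_mul_distrib, prod_const, prod_const, card_sdiff_of_subset (mem_powerset.1 hG),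
    Complex.real_smul]
  push_cast
  ring

lemma binomExp_one : binomExp E p (fun _ => (1 : ℝ)) = 1 := by
  rw [← Complex.ofReal_inj, ofReal_binomExp]
  simpa using binomExp_prod E (p := p) 1

lemma binomExp_sqrt_le (hp₀ : 0 ≤ p) (hp₁ : p ≤ 1) {F : Finset α → ℝ} (hF : ∀ G, 0 ≤ F G) {B : ℝ}
    (hB : 0 < B) (h : binomExp E p F ≤ B ^ 2) : binomExp E p (fun G => √(F G)) ≤ B := by
  have hAMGM (G : Finset α) : √(F G) ≤ (2 * B)⁻¹ • (B ^ 2 • (1 : ℝ) + F G) := by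
    rw [smul_eq_mul, inv_mul_eq_div, le_div_iff₀ (by positivity), smul_eq_mul]
    linarith [sq_nonneg (√(F G) - B), Real.sq_sqrt (hF G)]
  refine (binomExp_mono E hp₀ hp₁ hAMGM).trans ?_
  rw [binomExp_smul, binomExp_add, binomExp_smul, binomExp_one, smul_eq_mul, smul_eq_mul,
    inv_mul_le_iff₀ (by positivity)]
  linarith

lemma binomExp_prod_ite [DecidableEq α] {ι : Type*} [Fintype ι] {κ : ι → α}
    (hκ : Function.Injective κ) (hκE : ∀ t, κ t ∈ E) (f : ι → ℂ) :
    binomExp E p (fun G => ∏ t, if κ t ∈ G then f t else 1) = ∏ t, (p * f t + (1 - p)) := by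
  let w : α → ℂ := Function.extend κ f fun _ => 1
  have hw (t : ι) : w (κ t) = f t := hκ.extend_apply f (fun _ => 1) t
  have hw' {e : α} (he : e ∉ univ.image κ) : w e = 1 :=
    Function.extend_apply' f (fun _ => 1) e (by simpa using he)
  have hrange (s : Finset α) {g : α → ℂ} (hg : ∀ e ∉ univ.image κ, g e = 1) :
      ∏ e ∈ s, g e = ∏ t, if κ t ∈ s then g (κ t) else 1 := by
    rw [← prod_image (f := fun e => if e ∈ s then g e else 1) hκ.injOn, prod_ite_mem]
    exact (prod_subset inter_subset_right fun e hes he => hg e fun h =>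
      he (mem_inter.2 ⟨h, hes⟩)).symm
  calc binomExp E p (fun G => ∏ t, if κ t ∈ G then f t else 1)
      = binomExp E p (fun G => ∏ e ∈ G, w e) := by
        simp_rw [hrange _ fun _ => hw', hw]
    _ = ∏ t, (p * f t + (1 - p)) := by
        rw [binomExp_prod, hrange E fun e he => by rw [hw' he]; ring]
        simp only [hκE, if_true, hw]

lemma PrGnp_eq_binomExp (n : ℕ) (p : ℝ) (P : Finset (Sym2 (Fin n)) → Prop) [DecidablePred P] :
    PrGnp n p P = binomExp (completeEdges n) p fun G => if P G then (1 : ℝ) else 0 := by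
  simp only [PrGnp, binomExp, smul_eq_mul, mul_ite, mul_one, mul_zero]
  congr!

lemma PrGnp_mono {n : ℕ} (hp₀ : 0 ≤ p) (hp₁ : p ≤ 1) {P Q : Finset (Sym2 (Fin n)) → Prop}
    (h : ∀ G, P G → Q G) : PrGnp n p P ≤ PrGnp n p Q := by
  classical
  rw [PrGnp_eq_binomExp, PrGnp_eq_binomExp]
  refine binomExp_mono _ hp₀ hp₁ fun G => ?_
  by_cases hP : P G
  · rw [if_pos hP, if_pos (h G hP)]
  · rw [if_neg hP]
    split_ifs <;> norm_num

lemma one_sub_div_le_PrGnp {n : ℕ} (hp₀ : 0 ≤ p) (hp₁ : p ≤ 1) {F : Finset (Sym2 (Fin n)) → ℝ}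
    (hF : ∀ G, 0 ≤ F G) {a : ℝ} (ha : 0 < a) :
    1 - binomExp (completeEdges n) p F / a ≤ PrGnp n p fun G => F G ≤ a := by
  classical
  have hpoint (G : Finset (Sym2 (Fin n))) : 1 + (-a⁻¹) • F G ≤ if F G ≤ a then 1 else 0 := by
    rw [smul_eq_mul, neg_mul, inv_mul_eq_div]
    split_ifs with hG
    · linarith [div_nonneg (hF G) ha.le]
    · linarith [(one_lt_div ha).2 (not_le.1 hG)]
  rw [PrGnp_eq_binomExp]
  refine le_trans (le_of_eq ?_) (binomExp_mono _ hp₀ hp₁ hpoint)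
  rw [binomExp_add, binomExp_one, binomExp_smul, smul_eq_mul, neg_mul, inv_mul_eq_div,
    sub_eq_add_neg]

end BinomExp

section SwitchEffectExpectation

variable {n m l : ℕ}

lemma prod_switchCoeff {M : Type*} [CommMonoid M] (y y' : Fin m → Bool) {f : ℝ → M}
    (hf : f 0 = 1) :
    ∏ t, f (switchCoeff y y' t) = (f 1 * f (-1)) ^ (2 * hammingDist y y') := by
  have hpair (b : Bool) (j : Fin m) :
      ∏ c, f (switchCoeff y y' (b, j, c)) = if y j ≠ y' j then f 1 * f (-1) else 1 := by
    cases b <;> rcases hy : y j with _ | _ <;> rcases hy' : y' j with _ | _ <;>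
      simp [switchCoeff, hy, hy', hf, mul_comm]
  simp_rw [Fintype.prod_prod_type, hpair, prod_const, ← prod_filter, prod_const, ← pow_mul]
  simp [hammingDist, mul_comm]

/-- The edge that carries the coefficient `switchCoeff y y' t.2` in `switchEffect φ y y' G t.1`. -/
def switchEdge (φ : Label m l ↪ Fin n) (t : Fin m × Bool × Fin m × Bool) : Sym2 (Fin n) :=
  s(φ (.inl (t.1, t.2.1)), φ (.inr (.inl t.2.2)))

lemma switchEdge_injective (φ : Label m l ↪ Fin n) : Function.Injective (switchEdge φ) := by
  rintro ⟨i, b, t⟩ ⟨i', b', t'⟩ h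
  simp only [switchEdge, Sym2.eq_iff, φ.injective.eq_iff] at h
  simp_all

lemma switchEdge_mem_completeEdges (φ : Label m l ↪ Fin n) (t : Fin m × Bool × Fin m × Bool) :
    switchEdge φ t ∈ completeEdges n := by
  simp [completeEdges, switchEdge]

lemma switchFactor_eq (p c : ℝ) :
    (p * Complex.exp (↑(c * 1) * Complex.I) + (1 - p))
        * (p * Complex.exp (↑(c * -1) * Complex.I) + (1 - p))
      = ((1 - 2 * p * (1 - p) * (1 - Real.cos c) : ℝ) : ℂ) := by
  have hinv : Complex.exp (c * Complex.I) * Complex.exp (-c * Complex.I) = 1 := by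
    rw [← Complex.exp_add, neg_mul, add_neg_cancel, Complex.exp_zero]
  push_cast
  rw [Complex.cos, mul_one, mul_neg_one]
  linear_combination (p : ℂ) ^ 2 * hinv

lemma binomExp_exp_sum_switchEffect (φ : Label m l ↪ Fin n) (y y' : Fin m → Bool) (p : ℝ)
    (c : Fin m → ℝ) :
    binomExp (completeEdges n) p
        (fun G => Complex.exp (↑(∑ i, c i * switchEffect φ y y' G i) * Complex.I))
      = ∏ i, ((1 - 2 * p * (1 - p) * (1 - Real.cos (c i)) : ℝ) : ℂ) ^ (2 * hammingDist y y') := by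
  have hexp (G : Finset (Sym2 (Fin n))) :
      Complex.exp (↑(∑ i, c i * switchEffect φ y y' G i) * Complex.I)
        = ∏ t : Fin m × Bool × Fin m × Bool, if switchEdge φ t ∈ G
            then Complex.exp (↑(c t.1 * switchCoeff y y' t.2) * Complex.I) else 1 := by
    simp_rw [switchEffect, mul_sum, ← Fintype.sum_prod_type', Complex.ofReal_sum, sum_mul,
      Complex.exp_sum]
    refine prod_congr rfl fun t _ => ?_
    split_ifs with ht <;> simp_all [adj, switchEdge]
  simp_rw [hexp, binomExp_prod_ite _ (switchEdge_injective φ) (switchEdge_mem_completeEdges φ),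
    Fintype.prod_prod_type' fun i t =>
      p * Complex.exp (↑(c i * switchCoeff y y' t) * Complex.I) + (1 - p : ℂ)]
  refine prod_congr rfl fun i _ => ?_
  rw [prod_switchCoeff y y' (f := fun s => p * Complex.exp (↑(c i * s) * Complex.I) + (1 - p : ℂ))
    (by simp), switchFactor_eq]

lemma lazyCos_eq_sum (u : ℝ) :
    (lazyCos u : ℂ) = ∑ s : SignType, (if s = 0 then 3 / 4 else 1 / 8 : ℝ)
      * Complex.exp (↑((s : ℝ) * u) * Complex.I) := by
  rw [SignType.univ_eq]
  simp [lazyCos, Complex.cos]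
  ring

/-- Distinct `i` involve distinct edges, so the factors are independent. -/
lemma binomExp_prod_lazyCos (φ : Label m l ↪ Fin n) (y y' : Fin m → Bool) (p θ : ℝ) :
    binomExp (completeEdges n) p (fun G => ∏ i, lazyCos (θ * switchEffect φ y y' G i))
      = (3 / 4 + (1 - 2 * p * (1 - p) * (1 - Real.cos θ)) ^ (2 * hammingDist y y') / 4) ^ m := by
  let w (s : SignType) : ℝ := if s = 0 then 3 / 4 else 1 / 8
  have hexpand (G : Finset (Sym2 (Fin n))) :
      ((∏ i, lazyCos (θ * switchEffect φ y y' G i) : ℝ) : ℂ)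
        = ∑ σ : Fin m → SignType, (∏ i, (w (σ i) : ℂ))
            • Complex.exp (↑(∑ i, (σ i * θ) * switchEffect φ y y' G i) * Complex.I) := by
    simp_rw [Complex.ofReal_prod, lazyCos_eq_sum, prod_univ_sum, Fintype.piFinset_univ,
      prod_mul_distrib, Complex.ofReal_sum, sum_mul, Complex.exp_sum, smul_eq_mul, mul_assoc, w]
  have hsum : ∑ s : SignType, w s * (1 - 2 * p * (1 - p) * (1 - Real.cos (s * θ)))
        ^ (2 * hammingDist y y')
      = 3 / 4 + (1 - 2 * p * (1 - p) * (1 - Real.cos θ)) ^ (2 * hammingDist y y') / 4 := by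
    rw [SignType.univ_eq]
    simp [w]
    ring
  rw [← Complex.ofReal_inj, ofReal_binomExp]
  simp_rw [hexpand, binomExp_sum, binomExp_smul, binomExp_exp_sum_switchEffect, smul_eq_mul,
    ← prod_mul_distrib]
  rw [← hsum, Fintype.sum_pow]
  push_cast
  rfl

end SwitchEffectExpectation

section Decay

variable {n m l : ℕ} {p δ : ℝ}

lemma expect_pow_hammingDist {ι : Type*} [Fintype ι] [DecidableEq ι] (y : ι → Bool) (β : ℝ) :
    𝔼 y', β ^ hammingDist y y' = ((1 + β) / 2) ^ Fintype.card ι := by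
  have hprod (y' : ι → Bool) : β ^ hammingDist y y' = ∏ j, if y j ≠ y' j then β else 1 := by
    rw [← prod_filter, prod_const, hammingDist]
  have hcoord (j : ι) : 𝔼 b, (if y j ≠ b then β else 1) = (1 + β) / 2 := by
    rw [Fintype.expect_eq_sum_div_card]
    cases y j <;> simp [add_comm]
  simp_rw [hprod, expect_pi_prod fun j b => if y j ≠ b then β else 1, hcoord, prod_const,
    card_univ]

/-- The first term on the right exceeds `1` if `4 * d < m`. -/
lemma lazy_pow_le {x : ℝ} (hx₀ : 0 ≤ x) (hx₁ : 2 * x ≤ 1) (m d : ℕ) :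
    (3 / 4 + (1 - 2 * x) ^ (2 * d) / 4) ^ m
      ≤ (3 / 2) ^ m * (16 / 81) ^ d + ((3 + Real.exp (-(m * x))) / 4) ^ m := by
  have hρ₀ : 0 ≤ 1 - 2 * x := by linarith
  rcases lt_or_ge (4 * d) m with hd | hd
  · have hbase : 3 / 4 + (1 - 2 * x) ^ (2 * d) / 4 ≤ 1 := by
      linarith [pow_le_one₀ (n := 2 * d) hρ₀ (by linarith)]
    calc (3 / 4 + (1 - 2 * x) ^ (2 * d) / 4) ^ m ≤ 1 := pow_le_one₀ (by positivity) hbase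
      _ = (3 / 2) ^ m * (2 / 3) ^ m := by rw [← mul_pow]; norm_num
      _ ≤ (3 / 2) ^ m * (2 / 3) ^ (4 * d) := by
          gcongr ?_ * ?_
          exact pow_le_pow_of_le_one (by norm_num) (by norm_num) hd.le
      _ = (3 / 2) ^ m * (16 / 81) ^ d := by rw [pow_mul]; norm_num
      _ ≤ _ := le_add_of_nonneg_right (by positivity)
  · have hd' : (m : ℝ) ≤ 4 * d := mod_cast hd
    have hpow : (1 - 2 * x) ^ (2 * d) ≤ Real.exp (-(m * x)) := by
      calc (1 - 2 * x) ^ (2 * d) ≤ Real.exp (-(2 * x)) ^ (2 * d) := by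
            gcongr
            linarith [Real.add_one_le_exp (-(2 * x))]
        _ = Real.exp (-(4 * d * x)) := by
            rw [← Real.exp_nat_mul]
            push_cast
            ring_nf
        _ ≤ Real.exp (-(m * x)) := by gcongr
    calc (3 / 4 + (1 - 2 * x) ^ (2 * d) / 4) ^ m ≤ ((3 + Real.exp (-(m * x))) / 4) ^ m := by
          gcongr
          linarith
      _ ≤ _ := le_add_of_nonneg_left (by positivity)

lemma binomExp_prod_lazyCos_le (hp₀ : 0 ≤ p) (hp₁ : p ≤ 1) (φ : Label m l ↪ Fin n)
    (y y' : Fin m → Bool) (θ : ℝ) :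
    binomExp (completeEdges n) p (fun G => ∏ i, lazyCos (θ * switchEffect φ y y' G i))
      ≤ (3 / 2) ^ m * (16 / 81) ^ hammingDist y y'
        + ((3 + Real.exp (-(m * (p * (1 - p) * (1 - Real.cos θ))))) / 4) ^ m := by
  have hcos : 0 ≤ 1 - Real.cos θ := sub_nonneg.2 (Real.cos_le_one θ)
  rw [binomExp_prod_lazyCos, mul_assoc 2, mul_assoc 2]
  refine lazy_pow_le (mul_nonneg (mul_nonneg hp₀ (sub_nonneg.2 hp₁)) hcos) ?_ m _
  nlinarith [sq_nonneg (p - 1 / 2), Real.neg_one_le_cos θ]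

lemma binomExp_decoupledBound_le [Nonempty (Label m l ↪ Fin n)] (hp₀ : 0 ≤ p) (hp₁ : p ≤ 1)
    (θ : ℝ) :
    binomExp (completeEdges n) p (fun G => decoupledBound m l G θ)
      ≤ (9 / 10) ^ m + ((3 + Real.exp (-(m * (p * (1 - p) * (1 - Real.cos θ))))) / 4) ^ m := by
  simp_rw [decoupledBound, binomExp_expect]
  refine (expect_le_expect fun ω _ => binomExp_prod_lazyCos_le hp₀ hp₁ ω.1 ω.2.1 ω.2.2 θ).trans ?_
  simp_rw [← univ_product_univ, expect_product, expect_add_distrib, ← mul_expect,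
    expect_pow_hammingDist, Fintype.expect_const, Fintype.card_fin, ← mul_pow]
  gcongr
  norm_num

lemma le_mul_one_sub_cos (hδ : 0 < δ) (hp : δ ≤ p) (hp' : p ≤ 1 - δ) (hm : δ * n ≤ 4 * m) {θ : ℝ}
    (hθ : 1 ≤ n * θ ^ 2) (hθπ : |θ| ≤ Real.pi) :
    δ ^ 3 / (2 * Real.pi ^ 2) ≤ m * (p * (1 - p) * (1 - Real.cos θ)) := by
  have hcos : 2 / Real.pi ^ 2 * θ ^ 2 ≤ 1 - Real.cos θ := by
    linarith [Real.cos_le_one_sub_mul_cos_sq hθπ]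
  have hp₁ : δ ≤ 1 - p := by linarith
  have hpq : 0 ≤ p * (1 - p) := mul_nonneg (hδ.le.trans hp) (hδ.le.trans hp₁)
  calc δ ^ 3 / (2 * Real.pi ^ 2) ≤ δ ^ 3 / (2 * Real.pi ^ 2) * (n * θ ^ 2) :=
        le_mul_of_one_le_right (by positivity) hθ
    _ = δ * n / 4 * (δ * δ * (2 / Real.pi ^ 2 * θ ^ 2)) := by ring
    _ ≤ m * (p * (1 - p) * (1 - Real.cos θ)) := by
        gcongr
        · linarith
        · exact hδ.le.trans hp

lemma exists_binomExp_decoupledBound_le (hδ : 0 < δ) :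
    ∃ γ > 0, ∀ {n m l : ℕ} {p θ : ℝ}, Nonempty (Label m l ↪ Fin n) → δ ≤ p → p ≤ 1 - δ →
      δ * n ≤ 4 * m → 1 ≤ n * θ ^ 2 → |θ| ≤ Real.pi →
      binomExp (completeEdges n) p (fun G => decoupledBound m l G θ) ≤ 2 * Real.exp (-(γ * n)) := by
  set κ := max (9 / 10) ((3 + Real.exp (-(δ ^ 3 / (2 * Real.pi ^ 2)))) / 4)
  have hκ₀ : 0 < κ := lt_max_of_lt_left (by norm_num)
  have hκ₁ : κ < 1 := by
    have : Real.exp (-(δ ^ 3 / (2 * Real.pi ^ 2))) < 1 :=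
      Real.exp_lt_one_iff.2 (neg_lt_zero.2 (by positivity))
    exact max_lt (by norm_num) (by linarith)
  refine ⟨-Real.log κ * (δ / 4), mul_pos (neg_pos.2 (Real.log_neg hκ₀ hκ₁)) (by positivity),
    fun {n m l p θ} _ hp hp' hm hθ hθπ => ?_⟩
  calc binomExp (completeEdges n) p (fun G => decoupledBound m l G θ)
      ≤ (9 / 10) ^ m + ((3 + Real.exp (-(m * (p * (1 - p) * (1 - Real.cos θ))))) / 4) ^ m :=
        binomExp_decoupledBound_le (by linarith) (by linarith) θ
    _ ≤ κ ^ m + κ ^ m := by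
        gcongr
        · exact le_max_left _ _
        · refine le_trans ?_ (le_max_right _ _)
          gcongr
          exact le_mul_one_sub_cos hδ hp hp' hm hθ hθπ
    _ = 2 * Real.exp (Real.log κ * m) := by
        rw [← two_mul, mul_comm (Real.log κ), Real.exp_nat_mul, Real.exp_log hκ₀]
    _ ≤ 2 * Real.exp (-(-Real.log κ * (δ / 4) * n)) := by
        gcongr
        nlinarith [Real.log_neg hκ₀ hκ₁]

end Decay

/-! ### Descent to low frequencies -/

section DyadicDescent

variable {g : ℝ → ℝ} {a x : ℝ}

lemma interval_average_pow_four_le (hg : Continuous g) (hg₄ : ∀ θ, g θ ^ 4 ≤ g (2 * θ))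
    (hx : 0 < x) :
    (⨍ θ in x..2 * x, g θ) ^ 4 ≤ ⨍ θ in (2 * x)..2 * (2 * x), g θ := by
  have hle : x ≤ 2 * x := by linarith
  have hg₂ : Continuous fun θ => g (2 * θ) := by fun_prop
  calc (⨍ θ in x..2 * x, g θ) ^ 4 ≤ ⨍ θ in x..2 * x, g θ ^ 4 :=
        ConvexOn.map_set_average_le (even_two_mul 2).convexOn_pow (by fun_prop) isClosed_univ
          (by simp [hx]) (by simp) (.of_forall fun _ => Set.mem_univ _)
          (hg.intervalIntegrable _ _).def' ((hg.pow 4).intervalIntegrable _ _).def'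
    _ ≤ ⨍ θ in x..2 * x, g (2 * θ) := by
        rw [interval_average_eq, interval_average_eq]
        refine smul_le_smul_of_nonneg_left ?_ (inv_nonneg.2 (sub_nonneg.2 hle))
        exact intervalIntegral.integral_mono hle ((hg.pow 4).intervalIntegrable _ _)
          (hg₂.intervalIntegrable _ _) hg₄
    _ = ⨍ θ in (2 * x)..2 * (2 * x), g θ := by
        simp_rw [interval_average_eq, intervalIntegral.integral_comp_mul_left g two_ne_zero,
          smul_eq_mul]
        field_simp

lemma exp_neg_sq_le (y : ℝ) : Real.exp (-y ^ 2) ≤ 1 / (1 + y ^ 2) := by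
  rw [Real.exp_neg, ← one_div]
  gcongr
  linarith [Real.add_one_le_exp (y ^ 2)]

/-- Halving the frequency takes a fourth root of the averages, which turns the bound
`exp (-(a * x) ^ 2)` into `exp (-(a * x / 2) ^ 2)`; so `g` has Gaussian decay at every scale. -/
lemma interval_average_half_le (hg : Continuous g) (hg₄ : ∀ θ, g θ ^ 4 ≤ g (2 * θ)) (hx : 0 < x)
    (hI : ⨍ θ in (2 * x)..2 * (2 * x), g θ ≤ Real.exp (-(a * (2 * x)) ^ 2)) :
    ⨍ θ in x..2 * x, g θ ≤ Real.exp (-(a * x) ^ 2) := by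
  refine le_of_pow_le_pow_left₀ four_ne_zero (Real.exp_nonneg _)
    ((interval_average_pow_four_le hg hg₄ hx).trans (hI.trans_eq ?_))
  rw [← Real.exp_nat_mul]
  push_cast
  ring_nf

lemma integral_le_of_interval_average_le (hg : Continuous g) (hg₁ : ∀ θ, g θ ≤ 1)
    (hg₄ : ∀ θ, g θ ^ 4 ≤ g (2 * θ)) (ha : 0 < a) (hx : 0 < x)
    (hI : ⨍ θ in x..2 * x, g θ ≤ Real.exp (-(a * x) ^ 2)) :
    ∫ θ in 0..x, g θ ≤ 4 * x / (1 + a * x) := by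
  obtain ⟨J, hJ⟩ := pow_unbounded_of_one_lt (a * x) one_lt_two
  induction J generalizing x with
  | zero =>
    have htriv : ∫ θ in 0..x, g θ ≤ ∫ _ in 0..x, (1 : ℝ) :=
      intervalIntegral.integral_mono hx.le (hg.intervalIntegrable 0 x)
        (continuous_const.intervalIntegrable 0 x) hg₁
    rw [intervalIntegral.integral_const, smul_eq_mul, mul_one, sub_zero] at htriv
    refine htriv.trans ((le_div_iff₀ (by positivity)).2 ?_)
    nlinarith
  | succ J ih =>
    obtain ⟨y, rfl⟩ : ∃ y, x = 2 * y := ⟨x / 2, by ring⟩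
    have hy : 0 < y := by linarith
    have havg := interval_average_half_le hg hg₄ hy hI
    have hlow := ih hy havg (by rw [pow_succ] at hJ; linarith)
    have hhigh : ∫ θ in y..2 * y, g θ ≤ y / (1 + (a * y) ^ 2) := by
      rw [interval_average_eq, smul_eq_mul, two_mul, add_sub_cancel_left, ← two_mul,
        inv_mul_le_iff₀ hy] at havg
      refine havg.trans ?_
      rw [div_eq_mul_one_div]
      exact mul_le_mul_of_nonneg_left (exp_neg_sq_le _) hy.le
    rw [← intervalIntegral.integral_add_adjacent_intervals (hg.intervalIntegrable 0 y)
      (hg.intervalIntegrable y (2 * y))]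
    refine (add_le_add hlow hhigh).trans ?_
    rw [div_add_div _ _ (by positivity) (by positivity),
      div_le_div_iff₀ (by positivity) (by positivity)]
    have hquadratic : 0 ≤ 3 - 3 * (a * y) + 2 * (a * y) ^ 2 := by
      nlinarith [sq_nonneg (a * y - 3 / 4)]
    linear_combination y * hquadratic

lemma integral_le_of_pow_four_le {T : ℝ} (hg : Continuous g) (hg₀ : ∀ θ, 0 ≤ g θ)
    (hg₁ : ∀ θ, g θ ≤ 1) (hg₄ : ∀ θ, g θ ^ 4 ≤ g (2 * θ)) (ha : 0 < a) (hx : 0 < x)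
    (hT : 2 * x ≤ T) (hI : ∫ θ in x..T, g θ ≤ x * Real.exp (-(a * x) ^ 2)) :
    ∫ θ in 0..T, g θ ≤ 5 / a := by
  have hint (b c : ℝ) : IntervalIntegrable g volume b c := hg.intervalIntegrable b c
  have havg : ⨍ θ in x..2 * x, g θ ≤ Real.exp (-(a * x) ^ 2) := by
    rw [interval_average_eq, smul_eq_mul, two_mul, add_sub_cancel_left, ← two_mul,
      inv_mul_le_iff₀ hx]
    refine le_trans ?_ hI
    exact intervalIntegral.integral_mono_interval le_rfl (by linarith) hT (.of_forall hg₀)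
      (hint x T)
  have hlow : ∫ θ in 0..x, g θ ≤ 4 / a := by
    refine (integral_le_of_interval_average_le hg hg₁ hg₄ ha hx havg).trans ?_
    rw [div_le_div_iff₀ (by positivity) ha]
    linarith
  have hhigh : ∫ θ in x..T, g θ ≤ 1 / a := by
    refine hI.trans ((mul_le_mul_of_nonneg_left (exp_neg_sq_le _) hx.le).trans ?_)
    rw [mul_one_div, div_le_div_iff₀ (by positivity) ha]
    nlinarith [sq_nonneg (a * x - 1)]
  calc ∫ θ in 0..T, g θ = (∫ θ in 0..x, g θ) + ∫ θ in x..T, g θ :=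
        (intervalIntegral.integral_add_adjacent_intervals (hint 0 x) (hint x T)).symm
    _ ≤ 4 / a + 1 / a := add_le_add hlow hhigh
    _ = 5 / a := by ring

end DyadicDescent

/-! ### Point probabilities -/

section PointProbability

variable {n m l : ℕ}

/-- The contribution of the frequencies `θ ≥ 1 / √n` to the bound for the point probabilities of the
number of edges of `G` inside a random `(2m+l)`-set. -/
def highFrequencyMass (m l : ℕ) (G : Finset (Sym2 (Fin n))) : ℝ :=
  ∫ θ in (√n)⁻¹..Real.pi, √(decoupledBound m l G θ)

lemma inv_sqrt_natCast_le_one (n : ℕ) : (√n)⁻¹ ≤ 1 := by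
  rcases n.eq_zero_or_pos with rfl | hn
  · simp
  · exact inv_le_one_of_one_le₀ (Real.one_le_sqrt.2 (mod_cast hn))

lemma highFrequencyMass_nonneg (G : Finset (Sym2 (Fin n))) : 0 ≤ highFrequencyMass m l G :=
  intervalIntegral.integral_nonneg
    ((inv_sqrt_natCast_le_one n).trans (by linarith [Real.two_le_pi])) fun _ _ => Real.sqrt_nonneg _

lemma exists_binomExp_highFrequencyMass_le {δ : ℝ} (hδ : 0 < δ) :
    ∃ c > 0, ∀ {n m l : ℕ} {p : ℝ}, 0 < n → Nonempty (Label m l ↪ Fin n) → δ ≤ p → p ≤ 1 - δ →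
      δ * n ≤ 4 * m →
      binomExp (completeEdges n) p (highFrequencyMass m l) ≤ 8 * Real.exp (-(4 * c ^ 2 * n)) := by
  obtain ⟨γ, hγ, hdecay⟩ := exists_binomExp_decoupledBound_le hδ
  refine ⟨√(γ / 8), by positivity, fun {n m l p} hn hφ hp hp' hm => ?_⟩
  have hpi := inv_sqrt_natCast_le_one n
  have hτπ : (√n)⁻¹ ≤ Real.pi := by linarith [Real.two_le_pi]
  have hτ : 0 < (√n)⁻¹ := by positivity
  have hpoint (θ : ℝ) (hθ : θ ∈ Set.Icc (√n)⁻¹ Real.pi) :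
      binomExp (completeEdges n) p (fun G => √(decoupledBound m l G θ))
        ≤ 2 * Real.exp (-(γ / 2 * n)) := by
    refine binomExp_sqrt_le _ (by linarith) (by linarith)
      (fun G => decoupledBound_nonneg G θ) (by positivity) ?_
    have hθn : 1 ≤ n * θ ^ 2 := by
      calc (1 : ℝ) = n * (√n)⁻¹ ^ 2 := by
            rw [inv_pow, Real.sq_sqrt n.cast_nonneg, mul_inv_cancel₀ (by positivity)]
        _ ≤ n * θ ^ 2 := by gcongr; exact hθ.1
    refine (hdecay hφ hp hp' hm hθn (abs_le.2 ⟨by linarith [hθ.1], hθ.2⟩)).trans ?_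
    rw [mul_pow, ← Real.exp_nat_mul]
    push_cast
    ring_nf
    linarith [Real.exp_pos (-(γ * n))]
  have hint := binomExp_integral_le (completeEdges n) (p := p) hτπ
    (fun G => (continuous_decoupledBound (m := m) (l := l) G).sqrt) hpoint
  refine hint.trans ?_
  rw [Real.sq_sqrt (by positivity)]
  have : Real.pi - (√n)⁻¹ ≤ 4 := by linarith [Real.pi_le_four]
  calc (Real.pi - (√n)⁻¹) * (2 * Real.exp (-(γ / 2 * n))) ≤ 4 * (2 * Real.exp (-(γ / 2 * n))) := by
        gcongr
    _ = 8 * Real.exp (-(4 * (γ / 8) * n)) := by ring_nf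

lemma Pru_edgesIn_eq_le [Nonempty (Label m l ↪ Fin n)] (hn : 0 < n) {c : ℝ} (hc : 0 < c)
    {G : Finset (Sym2 (Fin n))}
    (hG : highFrequencyMass m l G ≤ (√n)⁻¹ * Real.exp (-(c ^ 2 * n))) (j : ℤ) :
    Pru (kSets n (2 * m + l)) (fun S => (edgesIn G S : ℤ) = j) ≤ 5 / (Real.pi * c * n) := by
  have hn' : (0 : ℝ) < n := mod_cast hn
  have hcont : Continuous fun θ => √(decoupledBound m l G θ) := (continuous_decoupledBound G).sqrt
  have hdescent : ∫ θ in 0..Real.pi, √(decoupledBound m l G θ) ≤ 5 / (c * n) := by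
    refine integral_le_of_pow_four_le hcont (fun _ => Real.sqrt_nonneg _)
      (fun θ => Real.sqrt_le_one.2 (decoupledBound_le_one G θ)) (fun θ => ?_) (by positivity)
      (inv_pos.2 (Real.sqrt_pos.2 hn')) ?_ (hG.trans_eq ?_)
    · refine Real.le_sqrt_of_sq_le ?_
      rw [← pow_mul, mul_comm 4, pow_mul, Real.sq_sqrt (decoupledBound_nonneg G θ)]
      exact decoupledBound_pow_four_le G θ
    · linarith [Real.two_le_pi, inv_sqrt_natCast_le_one n]
    · rw [mul_pow, inv_pow, Real.sq_sqrt hn'.le]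
      field_simp
  calc Pru (kSets n (2 * m + l)) (fun S => (edgesIn G S : ℤ) = j)
      ≤ Real.pi⁻¹ * ∫ θ in 0..Real.pi, ‖charFn (kSets n (2 * m + l)) (fun S => edgesIn G S) θ‖ := by
        simpa only [Int.cast_natCast] using
          Pru_eq_le_integral_norm_charFn (kSets n (2 * m + l)) (fun S => (edgesIn G S : ℤ)) j
    _ ≤ Real.pi⁻¹ * ∫ θ in 0..Real.pi, √(decoupledBound m l G θ) := by
        gcongr
        exact intervalIntegral.integral_mono Real.pi_pos.le
          ((continuous_charFn _ _).norm.intervalIntegrable _ _) (hcont.intervalIntegrable _ _)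
          fun θ => Real.le_sqrt_of_sq_le (norm_sq_charFn_le G θ)
    _ ≤ Real.pi⁻¹ * (5 / (c * n)) := by gcongr
    _ = 5 / (Real.pi * c * n) := by ring

lemma Pru_edgesIn_mem_Icc_le [Nonempty (Label m l ↪ Fin n)] (hn : 0 < n) {c : ℝ} (hc : 0 < c)
    {G : Finset (Sym2 (Fin n))}
    (hG : highFrequencyMass m l G ≤ (√n)⁻¹ * Real.exp (-(c ^ 2 * n))) (z : ℝ) {r : ℝ}
    (hr : 1 ≤ r) :
    Pru (kSets n (2 * m + l)) (fun S => (edgesIn G S : ℝ) ∈ Set.Icc z (z + r))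
      ≤ 10 / (Real.pi * c) * r / n := by
  have h := Pru_mem_Icc_le _ (fun S => (edgesIn G S : ℤ)) (Pru_edgesIn_eq_le hn hc hG) z
    (zero_le_one.trans hr)
  simp only [Int.cast_natCast] at h
  calc _ ≤ (r + 1) * (5 / (Real.pi * c * n)) := h
    _ ≤ (r + r) * (5 / (Real.pi * c * n)) := by gcongr
    _ = 10 / (Real.pi * c) * r / n := by ring

end PointProbability

/-! ### The interval bound -/

section IntervalBound

lemma exists_label_embedding {δ : ℝ} {n k : ℕ} (hn : 0 < n) (hδn : 2 ≤ δ * n)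
    (hk : δ ≤ (k : ℝ) / n) (hk' : (k : ℝ) / n ≤ 1 - δ) :
    ∃ m l : ℕ, 2 * m + l = k ∧ δ * n ≤ 4 * m ∧ Nonempty (Label m l ↪ Fin n) := by
  have hn' : (0 : ℝ) < n := mod_cast hn
  rw [le_div_iff₀ hn'] at hk
  rw [div_le_iff₀ hn'] at hk'
  have hkn : (k : ℝ) ≤ n := by linarith
  obtain ⟨j, rfl⟩ := Nat.exists_eq_add_of_le (Nat.cast_le.1 hkn)
  push_cast at hk hk' hδn hkn ⊢
  refine ⟨min k j / 2, k - 2 * (min k j / 2), by omega, ?_, ?_⟩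
  · have hhalf : (min k j : ℝ) ≤ 2 * (min k j / 2 : ℕ) + 1 := by
      exact_mod_cast (by omega : min k j ≤ 2 * (min k j / 2) + 1)
    have hmin : δ * (k + j) ≤ (min k j : ℝ) := le_min hk (by linarith)
    linarith
  · refine Function.Embedding.nonempty_of_card_le ?_
    simp only [Fintype.card_sum, Fintype.card_prod, Fintype.card_fin, Fintype.card_bool]
    omega

lemma eventually_exp_neg_le {b : ℝ} (hb : 0 < b) :
    ∀ᶠ n : ℕ in Filter.atTop,
      Real.exp (-(2 * b * n)) ≤ (√n)⁻¹ * Real.exp (-(b * n)) ∧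
      8 * Real.exp (-(4 * b * n)) / Real.exp (-(2 * b * n)) ≤ Real.exp (-√n) := by
  have hsqrt : Filter.Tendsto (fun n : ℕ => √(n : ℝ)) Filter.atTop Filter.atTop :=
    Real.tendsto_sqrt_atTop.comp tendsto_natCast_atTop_atTop
  have hlin : Filter.Tendsto (fun n : ℕ => b * (n : ℝ)) Filter.atTop Filter.atTop :=
    tendsto_natCast_atTop_atTop.const_mul_atTop hb
  filter_upwards [hsqrt.eventually_ge_atTop b⁻¹, hlin.eventually_ge_atTop (Real.log 8)]
    with n hn hlog
  have hpos : 0 < √n := (inv_pos.2 hb).trans_le hn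
  have hsqrt_le : √n ≤ b * n := by
    calc √n = b * (b⁻¹ * √n) := by rw [mul_inv_cancel_left₀ hb.ne']
      _ ≤ b * (√n * √n) := by gcongr
      _ = b * n := by rw [Real.mul_self_sqrt n.cast_nonneg]
  constructor
  · rw [← div_eq_inv_mul, le_div_iff₀' hpos]
    calc √n * Real.exp (-(2 * b * n)) ≤ Real.exp (b * n) * Real.exp (-(2 * b * n)) := by
          gcongr
          linarith [Real.add_one_le_exp (b * n)]
      _ = Real.exp (-(b * n)) := by rw [← Real.exp_add]; ring_nf
  · rw [mul_div_assoc, ← Real.exp_sub, ← Real.exp_log (show (0 : ℝ) < 8 by norm_num),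
      ← Real.exp_add]
    gcongr
    linarith

end IntervalBound

theorem stmt_13_general (δ : ℝ) (hδ : 0 < δ) :
    ∃ C > (0:ℝ), ∃ η > (0:ℝ), ∃ n₀ : ℕ, ∀ n ≥ n₀, ∀ p : ℝ, δ ≤ p → p ≤ 1 - δ →
      ∀ k : ℕ, δ ≤ (k:ℝ)/n → (k:ℝ)/n ≤ 1 - δ →
      PrGnp n p (fun G => ∀ z r : ℝ, 1 ≤ r →
          Pru (kSets n k) (fun S => (edgesIn G S : ℝ) ∈ Set.Icc z (z + r)) ≤ C * r / n)
        ≥ 1 - Real.exp (-(n:ℝ) ^ η) := by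
  obtain ⟨c, hc, hmass⟩ := exists_binomExp_highFrequencyMass_le hδ
  obtain ⟨n₀, hn₀⟩ := Filter.eventually_atTop.1 (eventually_exp_neg_le (pow_pos hc 2))
  refine ⟨10 / (Real.pi * c), by positivity, 1 / 2, by norm_num, max n₀ ⌈2 / δ⌉₊,
    fun n hn p hp hp' k hk hk' => ?_⟩
  obtain ⟨hthreshold, hmarkov⟩ := hn₀ n (le_of_max_le_left hn)
  have hδn : 2 ≤ δ * n := (div_le_iff₀' hδ).1 (Nat.ceil_le.1 (le_of_max_le_right hn))
  have hn : 0 < n := Nat.pos_of_ne_zero fun h => by norm_num [h] at hδn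
  obtain ⟨m, l, rfl, hm, hφ⟩ := exists_label_embedding hn hδn hk hk'
  have hp₀ : 0 ≤ p := hδ.le.trans hp
  have hp₁ : p ≤ 1 := by linarith
  rw [← Real.sqrt_eq_rpow]
  calc 1 - Real.exp (-√n)
      ≤ 1 - binomExp (completeEdges n) p (highFrequencyMass m l) / Real.exp (-(2 * c ^ 2 * n)) := by
        gcongr
        exact (div_le_div_of_nonneg_right (hmass hn hφ hp hp' hm) (Real.exp_nonneg _)).trans hmarkov
    _ ≤ PrGnp n p fun G => highFrequencyMass m l G ≤ Real.exp (-(2 * c ^ 2 * n)) :=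
        one_sub_div_le_PrGnp hp₀ hp₁ highFrequencyMass_nonneg (Real.exp_pos _)
    _ ≤ _ := PrGnp_mono hp₀ hp₁ fun G hG z r hr =>
        Pru_edgesIn_mem_Icc_le hn hc (hG.trans hthreshold) z hr

/-- Corollary 3.2: interval upper bound in `G_{n,p}`.
Fix `δ, ε > 0`. There are `C > 0`, `η > 0`, `n₀` such that for all `n ≥ n₀`, `p ∈ [δ, 1-δ]`
and `k` with `k/n ∈ [δ, 1-δ]`, with probability at least `1 - exp(-n^η)` over `G_{n,p}`:
for every `z ∈ ℝ` and every `r ≥ n^(3/4+ε)`, `P_S(e(S) ∈ [z, z+r]) ≤ C·r/n`. -/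
theorem stmt_13 (δ ε : ℝ) (hδ : 0 < δ) (hε : 0 < ε) :
    ∃ C > (0:ℝ), ∃ η > (0:ℝ), ∃ n₀ : ℕ, ∀ n ≥ n₀, ∀ p : ℝ, δ ≤ p → p ≤ 1 - δ →
      ∀ k : ℕ, δ ≤ (k:ℝ)/n → (k:ℝ)/n ≤ 1 - δ →
      PrGnp n p (fun G => ∀ z r : ℝ, r ≥ (n:ℝ) ^ ((3:ℝ)/4 + ε) →
          Pru (kSets n k) (fun S => (edgesIn G S : ℝ) ∈ Set.Icc z (z + r)) ≤ C * r / n)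
        ≥ 1 - Real.exp (-(n:ℝ) ^ η) := by
  obtain ⟨C, hC, η, hη, n₀, h⟩ := stmt_13_general δ hδ
  exact ⟨C, hC, η, hη, max n₀ 1, fun n hn p hp hp' k hk hk' =>
    le_trans (h n (le_of_max_le_left hn) p hp hp' k hk hk') <|
      PrGnp_mono (hδ.le.trans hp) (hp'.trans (by linarith)) fun G hG z r hr => hG z r <|
        (Real.one_le_rpow (mod_cast le_of_max_le_right hn) (by positivity)).trans hr⟩
end
end

section
/- Fix δ > 0, β > 0 and ε > 0. Then there exists n₀ such that the following holds for all n ≥ n₀: let p, k satisfy p ∈ [δ, 1−δ] and k/n ∈ [δ, 1−δ], let a, t be positive integers with t ≤ k/2 and a ≤ t^{3/2}·n^{2β−1/2}, let S' ⊆ [n] be a fixed set with |S'| = k−t, set m = ⌊(n−k+t)/t⌋, let 𝒯 = {T₁,…,T_m} be a family of pairwise disjoint t-element subsets of [n]∖S', let T be uniform on 𝒯, and let A = [z, z+a) for some z. Then with probability at least 1 − e^{−n^ε} over G = G_{n,p}: |P_T(e(S'∪T) − e(S') ∈ A) − P(Y ∈ A)| ≤ Δ_A, where Y ~ Bin((k−t)t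 + t(t−1)/2, p) and Δ_A = e^{−n^ε}/m if P(Y ∈ A) ≤ e^{−n^ε}/m, and Δ_A = n^{β+ε}/m otherwise. -/
/-!
The pairs gained by passing from `S'` to `S' ∪ T` are disjoint for disjoint `T`, so the events
"`T` gains a number of edges in `A`" are independent, each of probability `q = P(Y ∈ A)`, and
`m * P_T(...)` is the number of them which occur. If `q ≤ exp (-n ^ ε) / m`, then by the first
moment most likely none of them occurs. Otherwise Chernoff's inequality applies with parameter
`2 * n ^ (-β)`, since `m * q = O(n ^ (2 * β))`.

The bound on `q` follows from `P(Bin(ν, p) = j) ≤ 1 / √((ν + 1) p (1 - p))`. Indeed, with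
`Z ~ Bin(ν + 1, p)`, the truncated first moment `E[((ν + 1) p - Z) 1_{Z ≤ j}]` telescopes to
`(ν + 1) p (1 - p) P(Bin(ν, p) = j)`, and by Cauchy-Schwarz it is at most the standard deviation
of `Z`.
-/

open Finset MeasureTheory ProbabilityTheory

noncomputable section

section Chernoff

variable {Ω : Type*} [MeasurableSpace Ω] {μ : Measure Ω} [IsProbabilityMeasure μ]

lemma exp_mul_le_of_mem_Icc (x : ℝ) {y : ℝ} (hy : y ∈ Set.Icc 0 1) :
    Real.exp (x * y) ≤ 1 + (Real.exp x - 1) * y := by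
  have h := convexOn_exp.2 (Set.mem_univ x) (Set.mem_univ 0) hy.1 (sub_nonneg.2 hy.2) (by ring)
  simp only [smul_eq_mul, mul_zero, add_zero, Real.exp_zero, mul_one] at h
  rw [mul_comm x]
  linarith

lemma mgf_le_exp_of_mem_Icc {X : Ω → ℝ} (hX : AEMeasurable X μ)
    (h01 : ∀ᵐ ω ∂μ, X ω ∈ Set.Icc 0 1) (x : ℝ) :
    mgf X μ x ≤ Real.exp ((Real.exp x - 1) * μ[X]) := by
  have hint : Integrable X μ := .of_mem_Icc 0 1 hX h01
  calc mgf X μ x ≤ ∫ ω, (1 + (Real.exp x - 1) * X ω) ∂μ := by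
        refine integral_mono_ae (integrable_exp_mul_of_mem_Icc hX h01)
          ((integrable_const _).add (hint.const_mul _)) ?_
        filter_upwards [h01] with ω hω using exp_mul_le_of_mem_Icc x hω
    _ = (Real.exp x - 1) * μ[X] + 1 := by
        rw [integral_add (integrable_const _) (hint.const_mul _), integral_const_mul]
        simp [add_comm]
    _ ≤ Real.exp ((Real.exp x - 1) * μ[X]) := Real.add_one_le_exp _

variable {ι : Type*} {X : ι → Ω → ℝ}

lemma mgf_sum_le_exp_of_mem_Icc (hind : iIndepFun X μ) (hX : ∀ i, Measurable (X i))
    (h01 : ∀ i ω, X i ω ∈ Set.Icc 0 1) (s : Finset ι) (x : ℝ) :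
    mgf (∑ i ∈ s, X i) μ x ≤ Real.exp ((Real.exp x - 1) * ∑ i ∈ s, μ[X i]) := by
  rw [hind.mgf_sum hX, Finset.mul_sum, Real.exp_sum]
  exact Finset.prod_le_prod (fun i _ => mgf_nonneg) fun i _ =>
    mgf_le_exp_of_mem_Icc (hX i).aemeasurable (.of_forall (h01 i)) x

lemma mgf_sum_le_exp_mul_add_sq (hind : iIndepFun X μ) (hX : ∀ i, Measurable (X i))
    (h01 : ∀ i ω, X i ω ∈ Set.Icc 0 1) (s : Finset ι) {x : ℝ} (hx : |x| ≤ 1) :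
    mgf (∑ i ∈ s, X i) μ x ≤ Real.exp ((∑ i ∈ s, μ[X i]) * (x + x ^ 2)) := by
  refine (mgf_sum_le_exp_of_mem_Icc hind hX h01 s x).trans (Real.exp_le_exp.2 ?_)
  rw [mul_comm]
  refine mul_le_mul_of_nonneg_left ?_
    (Finset.sum_nonneg fun i _ => integral_nonneg fun ω => (h01 i ω).1)
  linarith [(abs_le.1 (Real.abs_exp_sub_one_sub_id_le hx)).2]

lemma measureReal_abs_sum_sub_ge_le (hind : iIndepFun X μ) (hX : ∀ i, Measurable (X i))
    (h01 : ∀ i ω, X i ω ∈ Set.Icc 0 1) (s : Finset ι) {x : ℝ} (hx0 : 0 ≤ x) (hx1 : x ≤ 1)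
    (c : ℝ) :
    μ.real {ω | c ≤ |∑ i ∈ s, X i ω - ∑ i ∈ s, μ[X i]|}
      ≤ 2 * Real.exp ((∑ i ∈ s, μ[X i]) * x ^ 2 - x * c) := by
  set M := ∑ i ∈ s, μ[X i]
  have hS : Measurable (∑ i ∈ s, X i) := by fun_prop
  have hS01 (ω : Ω) : (∑ i ∈ s, X i) ω ∈ Set.Icc 0 (s.card : ℝ) := by
    simp only [Finset.sum_apply]
    refine ⟨Finset.sum_nonneg fun i _ => (h01 i ω).1, ?_⟩
    simpa using Finset.sum_le_card_nsmul s (X · ω) 1 fun i _ => (h01 i ω).2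
  have hint (y : ℝ) : Integrable (fun ω => Real.exp (y * (∑ i ∈ s, X i) ω)) μ :=
    integrable_exp_mul_of_mem_Icc hS.aemeasurable (.of_forall hS01)
  have hmgf (y : ℝ) (hy : |y| ≤ 1) : mgf (∑ i ∈ s, X i) μ y ≤ Real.exp (M * (y + y ^ 2)) :=
    mgf_sum_le_exp_mul_add_sq hind hX h01 s hy
  have hupper : μ.real {ω | M + c ≤ (∑ i ∈ s, X i) ω} ≤ Real.exp (M * x ^ 2 - x * c) := by
    refine (measure_ge_le_exp_mul_mgf _ hx0 (hint x)).trans ?_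
    refine (mul_le_mul_of_nonneg_left (hmgf _ (abs_le.2 ⟨by linarith, hx1⟩))
      (Real.exp_pos _).le).trans_eq ?_
    rw [← Real.exp_add]
    ring_nf
  have hlower : μ.real {ω | (∑ i ∈ s, X i) ω ≤ M - c} ≤ Real.exp (M * x ^ 2 - x * c) := by
    refine (measure_le_le_exp_mul_mgf _ (neg_nonpos.2 hx0) (hint (-x))).trans ?_
    refine (mul_le_mul_of_nonneg_left (hmgf _ (abs_le.2 ⟨by linarith, by linarith⟩))
      (Real.exp_pos _).le).trans_eq ?_
    rw [← Real.exp_add]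
    ring_nf
  rw [two_mul]
  refine (measureReal_mono fun ω hω => ?_).trans
    ((measureReal_union_le _ _).trans (add_le_add hupper hlower))
  simp only [Set.mem_union, Set.mem_ofPred_eq, Finset.sum_apply] at hω ⊢
  exact (le_abs.1 hω).imp (fun h => by linarith) (fun h => by linarith)

end Chernoff

section Occurrences

variable {Ω κ : Type*} [Fintype κ]

/-- The number of the events `E k` which occur at `ω`. It is real-valued so that it can be
averaged. -/
def occurrences (E : κ → Set Ω) (ω : Ω) : ℝ := ∑ k, (E k).indicator 1 ω

open Classical in
lemma occurrences_eq_card (E : κ → Set Ω) (ω : Ω) :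
    occurrences E ω = Finset.card {k | ω ∈ E k} := by
  simp [occurrences, Set.indicator_apply]

variable [MeasurableSpace Ω] {μ : Measure Ω} {E : κ → Set Ω} {q y w C : ℝ}

lemma measureReal_occurrences_ne_zero_le [IsFiniteMeasure μ] (E : κ → Set Ω) :
    μ.real {ω | occurrences E ω ≠ 0} ≤ ∑ k, μ.real (E k) := by
  refine (measureReal_mono fun ω hω => ?_).trans (measureReal_iUnion_fintype_le E)
  obtain ⟨k, -, hk⟩ := Finset.exists_ne_zero_of_sum_ne_zero hω
  exact Set.mem_iUnion.2 ⟨k, Set.mem_of_indicator_ne_zero hk⟩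

lemma measureReal_lt_abs_occurrences_div_card_sub_le_of_le [IsFiniteMeasure μ] [Nonempty κ]
    (hq : ∀ k, μ.real (E k) = q) (hqw : q ≤ Real.exp (-w) / Fintype.card κ) :
    μ.real {ω | Real.exp (-w) / Fintype.card κ < |occurrences E ω / Fintype.card κ - q|}
      ≤ Real.exp (-w) := by
  have hm : (0 : ℝ) < Fintype.card κ := by simp [Fintype.card_pos]
  have hq0 : 0 ≤ q := hq (Classical.arbitrary κ) ▸ measureReal_nonneg
  refine (measureReal_mono (s₂ := {ω | occurrences E ω ≠ 0}) fun ω hω h0 => ?_).trans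
    ((measureReal_occurrences_ne_zero_le E).trans ?_)
  · rw [Set.mem_ofPred_eq, h0, zero_div, zero_sub, abs_neg, abs_of_nonneg hq0] at hω
    exact hω.not_ge hqw
  · rw [le_div_iff₀ hm] at hqw
    simpa [hq, mul_comm] using hqw

variable [IsProbabilityMeasure μ]

lemma measureReal_abs_occurrences_sub_ge_le (hE : ∀ k, MeasurableSet (E k))
    (hind : iIndepSet E μ) {x : ℝ} (hx0 : 0 ≤ x) (hx1 : x ≤ 1) (c : ℝ) :
    μ.real {ω | c ≤ |occurrences E ω - ∑ k, μ.real (E k)|}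
      ≤ 2 * Real.exp ((∑ k, μ.real (E k)) * x ^ 2 - x * c) := by
  have h01 (k : κ) (ω : Ω) : (E k).indicator (1 : Ω → ℝ) ω ∈ Set.Icc 0 1 := by
    by_cases h : ω ∈ E k <;> simp [h]
  have hind' : iIndepFun (fun k => (E k).indicator (1 : Ω → ℝ)) μ := hind.iIndepFun_indicator
  simpa only [occurrences, integral_indicator_one (hE _)] using
    measureReal_abs_sum_sub_ge_le hind' (fun k => measurable_one.indicator (hE k)) h01
      Finset.univ hx0 hx1 c

variable [Nonempty κ]

/- The Chernoff bound is used with parameter `2 / y`: its second order term is then at most `4 * C`,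
while a deviation of `y * w` contributes `-2 * w`. -/
lemma measureReal_lt_abs_occurrences_div_card_sub_le (hE : ∀ k, MeasurableSet (E k))
    (hind : iIndepSet E μ) (hq : ∀ k, μ.real (E k) = q)
    (hy : 2 ≤ y) (hmq : Fintype.card κ * q ≤ C * y ^ 2) (hw : 4 * C + 1 ≤ w) :
    μ.real {ω | y * w / Fintype.card κ < |occurrences E ω / Fintype.card κ - q|}
      ≤ Real.exp (-w) := by
  have hm : (0 : ℝ) < Fintype.card κ := by simp [Fintype.card_pos]
  have hsum : ∑ k, μ.real (E k) = Fintype.card κ * q := by simp [hq]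
  calc μ.real {ω | y * w / Fintype.card κ < |occurrences E ω / Fintype.card κ - q|}
      ≤ μ.real {ω | y * w ≤ |occurrences E ω - ∑ k, μ.real (E k)|} := by
        refine measureReal_mono fun ω hω => ?_
        have hdiv : occurrences E ω / Fintype.card κ - q
            = (occurrences E ω - Fintype.card κ * q) / Fintype.card κ := by field_simp
        rw [Set.mem_ofPred_eq, hdiv, abs_div, abs_of_pos hm, div_lt_div_iff_of_pos_right hm] at hω
        rw [Set.mem_ofPred_eq, hsum]
        exact hω.le
    _ ≤ 2 * Real.exp (Fintype.card κ * q * (2 / y) ^ 2 - 2 / y * (y * w)) := by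
        rw [← hsum]
        exact measureReal_abs_occurrences_sub_ge_le hE hind (by positivity)
          ((div_le_one (by positivity)).2 hy) _
    _ ≤ Real.exp 1 * Real.exp (C * y ^ 2 * (2 / y) ^ 2 - 2 / y * (y * w)) := by
        gcongr
        linarith [Real.add_one_le_exp 1]
    _ = Real.exp (4 * C + 1 - 2 * w) := by
        rw [← Real.exp_add]
        congr 1
        field_simp
        ring
    _ ≤ Real.exp (-w) := Real.exp_le_exp.2 (by linarith)

lemma measureReal_ite_lt_abs_occurrences_div_card_sub_le (hE : ∀ k, MeasurableSet (E k))
    (hind : iIndepSet E μ) (hq : ∀ k, μ.real (E k) = q)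
    (hy : 2 ≤ y) (hmq : Fintype.card κ * q ≤ C * y ^ 2) (hw : 4 * C + 1 ≤ w) :
    μ.real {ω | (if q ≤ Real.exp (-w) / Fintype.card κ then Real.exp (-w) / Fintype.card κ
        else y * w / Fintype.card κ) < |occurrences E ω / Fintype.card κ - q|} ≤ Real.exp (-w) := by
  split_ifs with h
  · exact measureReal_lt_abs_occurrences_div_card_sub_le_of_le hq h
  · exact measureReal_lt_abs_occurrences_div_card_sub_le hE hind hq hy hmq hw

end Occurrences

section RandomSets

open scoped unitInterval

lemma iIndepFun_curry {Ω ι : Type*} {κ : ι → Type*} {𝓧 : (i : ι) → κ i → Type*}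
    [MeasurableSpace Ω] [∀ i j, MeasurableSpace (𝓧 i j)] {μ : Measure Ω}
    {X : (i : ι) → (j : κ i) → Ω → 𝓧 i j} (hX : ∀ i j, Measurable (X i j))
    (hind : iIndepFun (fun (ij : (i : ι) × κ i) ω => X ij.1 ij.2 ω) μ) :
    iIndepFun (fun i ω j => X i j ω) μ := by
  have := hind.isProbabilityMeasure
  have (i : ι) (j : κ i) : IsProbabilityMeasure (μ.map (X i j)) :=
    Measure.isProbabilityMeasure_map (hX i j).aemeasurable
  have hrow (i : ι) :
      μ.map (fun ω j => X i j ω) = Measure.infinitePi fun j => μ.map (X i j) :=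
    (hind.precomp (g := fun j : κ i => ⟨i, j⟩) sigma_mk_injective).map_fun_eq_infinitePi_map (hX i)
  rw [iIndepFun_iff_map_fun_eq_infinitePi_map (by fun_prop)]
  simp_rw [hrow]
  rw [← Measure.infinitePi_map_piCurry (fun i j => μ.map (X i j)),
    ← hind.map_fun_eq_infinitePi_map (fun ij => hX ij.1 ij.2),
    Measure.map_map (by fun_prop) (by fun_prop)]
  rfl

variable {ι : Type*} {u : Set ι} {p : I}

lemma iIndepFun_mem_setBernoulli : iIndepFun (fun i (s : Set ι) => i ∈ s) setBer(u, p) := by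
  rw [iIndepFun_iff_map_fun_eq_infinitePi_map (by fun_prop), setBernoulli_eq_map,
    Measure.map_map (by fun_prop) (by fun_prop)]
  conv_rhs =>
    enter [1, i]
    rw [Measure.map_map (by fun_prop) (by fun_prop)]
  simp only [Function.comp_def, Set.mem_ofPred_eq, Measure.map_id', Measure.infinitePi_map_eval]

lemma iIndepFun_inter_setBernoulli {κ : Type*} {B : κ → Set ι}
    (hB : Pairwise (Function.onFun Disjoint B)) :
    iIndepFun (fun k (s : Set ι) => s ∩ B k) setBer(u, p) := by
  have hinj : Function.Injective fun ki : (k : κ) × B k => (ki.2 : ι) := by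
    rintro ⟨k, i, hi⟩ ⟨l, j, hj⟩ (rfl : i = j)
    obtain rfl : k = l := by_contra fun hkl => Set.disjoint_left.1 (hB hkl) hi hj
    rfl
  have hrows : iIndepFun (fun k (s : Set ι) (i : B k) => (i : ι) ∈ s) setBer(u, p) :=
    iIndepFun_curry (fun _ _ => by fun_prop) (iIndepFun_mem_setBernoulli.precomp hinj)
  have hmeas (k : κ) : Measurable fun r : B k → Prop => {i | ∃ h : i ∈ B k, r ⟨i, h⟩} := by
    refine measurable_set_iff.2 fun i => ?_
    by_cases hi : i ∈ B k
    · simpa [hi] using measurable_pi_apply (⟨i, hi⟩ : B k)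
    · simp [hi]
  convert hrows.comp _ hmeas using 2 with k
  ext s i
  simp [and_comm]

lemma measurable_inter_const (v : Set ι) : Measurable (· ∩ v : Set ι → Set ι) :=
  measurable_set_iff.2 fun i => (measurable_set_mem i).and measurable_const

lemma setBernoulli_map_inter (u v : Set ι) (p : I) :
    setBer(u, p).map (· ∩ v) = setBer(u ∩ v, p) := by
  have hcomp : (· ∩ v) ∘ (fun r : ι → Prop => {i | r i}) =
      (fun r : ι → Prop => {i | r i}) ∘ fun r i => r i ∧ i ∈ v := rfl
  rw [setBernoulli_eq_map, setBernoulli_eq_map,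
    Measure.map_map (measurable_inter_const v) (by fun_prop), hcomp,
    ← Measure.map_map (by fun_prop) (by fun_prop),
    Measure.infinitePi_map_pi (f := fun i q => q ∧ i ∈ v) _ (fun _ => .of_discrete)]
  congr! 3 with i
  rw [Measure.map_add _ _ .of_discrete]
  simp

lemma setBernoulli_map_ncard [Countable ι] (hu : u.Finite) (p : I) :
    setBer(u, p).map Set.ncard = Bin(u.ncard, p) :=
  Measure.ext_of_measureReal_singleton fun k => by
    rw [map_ncard_setBernoulli_real_singleton hu, binomial_real_singleton]

variable [Countable ι] (p) (A : Set ℕ)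

lemma measurable_ncard_inter (v : Set ι) : Measurable fun s : Set ι => (s ∩ v).ncard :=
  measurable_ncard.comp (measurable_inter_const v)

lemma setBernoulli_real_ncard_inter_mem {v : Set ι} (hv : v.Finite) (hvu : v ⊆ u) :
    setBer(u, p).real {s | (s ∩ v).ncard ∈ A} = Bin(v.ncard, p).real A := by
  have hlaw : (setBer(u, p).map (· ∩ v)).map Set.ncard = Bin(v.ncard, p) := by
    rw [setBernoulli_map_inter, Set.inter_eq_right.2 hvu, setBernoulli_map_ncard hv]
  have hv' := measurable_inter_const v
  rw [← hlaw, Measure.map_map measurable_ncard hv',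
    map_measureReal_apply (measurable_ncard.comp hv') .of_discrete]
  rfl

lemma iIndepSet_ncard_inter_mem_setBernoulli {κ : Type*} {B : κ → Set ι}
    (hB : Pairwise (Function.onFun Disjoint B)) :
    iIndepSet (fun k => {s : Set ι | (s ∩ B k).ncard ∈ A}) setBer(u, p) := by
  have hA : MeasurableSet A := .of_discrete
  have hind := (iIndepFun_inter_setBernoulli hB (u := u) (p := p)).comp
    (fun _ => Set.ncard) (fun _ => measurable_ncard)
  refine (iIndepSet_iff_meas_biInter fun k => measurable_ncard_inter (B k) hA).2 fun s => ?_
  exact hind.meas_biInter fun k _ => ⟨A, hA, rfl⟩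

end RandomSets

section Binomial

lemma sq_setIntegral_le_integral_sq {Ω : Type*} [MeasurableSpace Ω] {μ : Measure Ω}
    [IsProbabilityMeasure μ] {f : Ω → ℝ} (hf : MemLp f 2 μ) {s : Set Ω} (hs : MeasurableSet s) :
    (∫ ω in s, f ω ∂μ) ^ 2 ≤ ∫ ω, f ω ^ 2 ∂μ := by
  have hg : MemLp (s.indicator f) 2 μ := hf.indicator hs
  calc (∫ ω in s, f ω ∂μ) ^ 2 = μ[s.indicator f] ^ 2 := by rw [integral_indicator hs]
    _ ≤ μ[(s.indicator f) ^ 2] := sub_nonneg.1 (variance_eq_sub hg ▸ variance_nonneg _ μ)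
    _ ≤ ∫ ω, f ω ^ 2 ∂μ := integral_mono hg.integrable_sq hf.integrable_sq fun ω => by
        by_cases hω : ω ∈ s <;> simp [hω, sq_nonneg]

open scoped unitInterval

variable (n : ℕ) (p : I)

lemma binomial_real_singleton_succ_mul (j : ℕ) :
    (j + 1) * Bin(n + 1, p).real {j + 1} = (n + 1) * p * Bin(n, p).real {j} := by
  have habsorb : ((n : ℝ) + 1) * n.choose j = (n + 1).choose (j + 1) * (j + 1) := by
    exact_mod_cast Nat.add_one_mul_choose_eq n j
  rw [binomial_real_singleton, binomial_real_singleton, Nat.succ_sub_succ, pow_succ]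
  linear_combination -(p : ℝ) ^ j * p * (1 - p) ^ (n - j) * habsorb

lemma binomial_succ_real_singleton_succ (j : ℕ) :
    Bin(n + 1, p).real {j + 1}
      = p * Bin(n, p).real {j} + (1 - p) * Bin(n, p).real {j + 1} := by
  simp only [binomial_real_singleton, Nat.choose_succ_succ', Nat.succ_sub_succ]
  obtain hj | hj := lt_or_ge j n
  · obtain ⟨d, rfl⟩ := Nat.exists_eq_add_of_lt hj
    rw [show j + d + 1 - j = d + 1 by omega, show j + d + 1 - (j + 1) = d by omega]
    push_cast
    ring
  · rw [Nat.choose_eq_zero_of_lt (show n < j + 1 by omega)]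
    push_cast
    ring

/- Pascal's rule and absorption turn each summand into
`(n + 1) p (1 - p) (b i - b (i - 1))` with `b i = P(Bin(n, p) = i)`, so the sum telescopes. -/
lemma sum_sub_mul_binomial_succ_real_singleton (j : ℕ) :
    ∑ i ∈ Finset.range (j + 1), (((n + 1 : ℕ) : ℝ) * p - i) * Bin(n + 1, p).real {i}
      = ((n + 1 : ℕ) : ℝ) * p * (1 - p) * Bin(n, p).real {j} := by
  induction j with
  | zero =>
    simp only [zero_add, Finset.sum_range_one, binomial_real_zero]
    push_cast
    ring
  | succ j ih =>
    rw [Finset.sum_range_succ, ih]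
    push_cast
    linear_combination ((n : ℝ) + 1) * p * binomial_succ_real_singleton_succ n p j
      - binomial_real_singleton_succ_mul n p j

lemma integral_sub_sq_binomial :
    ∫ i, ((n : ℝ) * p - i) ^ 2 ∂Bin(n, p) = n * p * (1 - p) := by
  have h := congrArg (Polynomial.eval (p : ℝ)) (bernsteinPolynomial.variance ℝ n)
  rw [integral_binomial, ← Nat.range_succ_eq_Iic]
  simpa [Polynomial.eval_finsetSum, bernsteinPolynomial, mul_comm, mul_assoc, mul_left_comm] using h

lemma mul_binomial_real_singleton_sq_le_one (j : ℕ) :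
    ((n + 1 : ℕ) : ℝ) * p * (1 - p) * Bin(n, p).real {j} ^ 2 ≤ 1 := by
  set V : ℝ := ((n + 1 : ℕ) : ℝ) * p * (1 - p) with hV
  have hV0 : 0 ≤ V := by
    have := p.2.1
    have := sub_nonneg.2 p.2.2
    positivity
  have hvar : (V * Bin(n, p).real {j}) ^ 2 ≤ V := by
    rw [hV, ← sum_sub_mul_binomial_succ_real_singleton, ← integral_sub_sq_binomial]
    have hLp : MemLp (fun i : ℕ => ((n + 1 : ℕ) : ℝ) * p - i) 2 Bin(n + 1, p) :=
      (memLp_two_iff_integrable_sq .of_discrete).2 (integrable_binomial _)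
    refine le_trans (le_of_eq ?_) (sq_setIntegral_le_integral_sq hLp
      (s := Finset.range (j + 1)) .of_discrete)
    rw [setIntegral_finset (hf := (integrable_binomial _).integrableOn)]
    simp only [smul_eq_mul, mul_comm]
  rcases hV0.eq_or_lt with h0 | hpos
  · simp [← h0]
  · refine le_of_mul_le_mul_left ?_ hpos
    linarith

variable {p}

lemma binomial_real_singleton_le_inv_sqrt (hp0 : 0 < p) (hp1 : p < 1) (j : ℕ) :
    Bin(n, p).real {j} ≤ (√(((n + 1 : ℕ) : ℝ) * p * (1 - p)))⁻¹ := by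
  have hp : (0 : ℝ) < p := by exact_mod_cast hp0
  have hp' : (0 : ℝ) < 1 - p := sub_pos.2 (by exact_mod_cast hp1)
  have hV : 0 < ((n + 1 : ℕ) : ℝ) * p * (1 - p) := by positivity
  rw [← Real.sqrt_inv]
  refine Real.le_sqrt_of_sq_le ?_
  rw [← one_div, le_div_iff₀' hV]
  exact mul_binomial_real_singleton_sq_le_one n p j

lemma binomial_real_finset_le_card_div_sqrt (hp0 : 0 < p) (hp1 : p < 1) (s : Finset ℕ) :
    Bin(n, p).real s ≤ s.card / √(((n + 1 : ℕ) : ℝ) * p * (1 - p)) := by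
  rw [← sum_measureReal_singleton, div_eq_mul_inv, ← nsmul_eq_mul]
  exact Finset.sum_le_card_nsmul _ _ _ fun j _ => binomial_real_singleton_le_inv_sqrt n hp0 hp1 j

lemma binomial_real_preimage_Ico_le (hp0 : 0 < p) (hp1 : p < 1) (z : ℝ) (a : ℕ) :
    Bin(n, p).real (Nat.cast ⁻¹' Set.Ico z (z + a))
      ≤ a / √(((n + 1 : ℕ) : ℝ) * p * (1 - p)) := by
  rw [Nat.preimage_Ico, ← Finset.coe_Ico]
  refine (binomial_real_finset_le_card_div_sqrt n hp0 hp1 _).trans ?_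
  gcongr
  rw [Nat.card_Ico, tsub_le_iff_left]
  refine Nat.ceil_le.2 ?_
  push_cast
  gcongr
  exact Nat.le_ceil z

lemma binomPr_eq_binomial_real (p : I) (P : ℕ → Prop) :
    binomPr n p P = Bin(n, p).real {j | P j} := by
  rw [binomPr, ← integral_indicator_one .of_discrete, integral_binomial, Nat.range_succ_eq_Iic]
  refine Finset.sum_congr rfl fun j _ => ?_
  by_cases hj : P j <;> simp [hj]

end Binomial

section Edges

variable {V : Type*} [DecidableEq V]

/-- The edges of the complete graph on `S`. -/
def pairsIn (S : Finset V) : Finset (Sym2 V) := {e ∈ S.sym2 | ¬ e.IsDiag}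

/-- The edges which the complete graph on `S ∪ T` has in addition to the one on `S`. -/
def newPairs (S T : Finset V) : Finset (Sym2 V) := pairsIn (S ∪ T) \ pairsIn S

lemma pairsIn_mono {S U : Finset V} (h : S ⊆ U) : pairsIn S ⊆ pairsIn U :=
  Finset.filter_subset_filter _ (Finset.sym2_mono h)

lemma mem_newPairs {S T : Finset V} {e : Sym2 V} :
    e ∈ newPairs S T ↔ ¬ e.IsDiag ∧ (∀ v ∈ e, v ∈ S ∪ T) ∧ ∃ v ∈ e, v ∉ S := by
  simp only [newPairs, pairsIn, Finset.mem_sdiff, Finset.mem_filter, Finset.mem_sym2_iff,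
    not_and, not_not]
  grind

lemma card_pairsIn (S : Finset V) : (pairsIn S).card = S.card.choose 2 := by
  rw [pairsIn, Finset.sym2_eq_image, Sym2.filter_image_mk_not_isDiag, Sym2.card_image_offDiag]

lemma add_choose_two (s t : ℕ) : (s + t).choose 2 = s.choose 2 + s * t + t.choose 2 := by
  simp [Nat.add_choose_eq, Finset.Nat.antidiagonal_succ]
  ring

lemma card_newPairs {S T : Finset V} (h : Disjoint S T) :
    (newPairs S T).card = S.card * T.card + T.card * (T.card - 1) / 2 := by
  rw [newPairs, Finset.card_sdiff_of_subset (pairsIn_mono Finset.subset_union_left), card_pairsIn,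
    card_pairsIn, Finset.card_union_of_disjoint h, add_choose_two, Nat.choose_two_right T.card]
  omega

lemma disjoint_newPairs {S T U : Finset V} (h : Disjoint T U) :
    Disjoint (newPairs S T) (newPairs S U) := by
  refine Finset.disjoint_left.2 fun e hT hU => ?_
  obtain ⟨-, hT, v, hv, hvS⟩ := mem_newPairs.1 hT
  exact Finset.disjoint_left.1 h ((Finset.mem_union.1 (hT v hv)).resolve_left hvS)
    ((Finset.mem_union.1 ((mem_newPairs.1 hU).2.1 v hv)).resolve_left hvS)

variable {n : ℕ}

lemma completeEdges_eq_pairsIn_univ : completeEdges n = pairsIn Finset.univ := by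
  ext e
  simp [completeEdges, pairsIn]

lemma newPairs_subset_completeEdges (S T : Finset (Fin n)) : newPairs S T ⊆ completeEdges n := by
  rw [completeEdges_eq_pairsIn_univ]
  exact Finset.sdiff_subset.trans (pairsIn_mono (Finset.subset_univ _))

variable {G : Finset (Sym2 (Fin n))}

lemma edgesIn_eq_card_inter_pairsIn (hG : G ⊆ completeEdges n) (S : Finset (Fin n)) :
    edgesIn G S = (G ∩ pairsIn S).card := by
  rw [edgesIn]
  congr 1
  ext e
  have hdiag : e ∈ G → ¬ e.IsDiag := fun he => by simpa [completeEdges] using hG he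
  simp only [pairsIn, Finset.mem_filter, Finset.mem_inter, Finset.mem_sym2_iff]
  tauto

lemma edgesIn_union_sub_edgesIn (hG : G ⊆ completeEdges n) (S T : Finset (Fin n)) :
    (edgesIn G (S ∪ T) : ℝ) - edgesIn G S = (G ∩ newPairs S T).card := by
  have hsub : G ∩ pairsIn S ⊆ G ∩ pairsIn (S ∪ T) :=
    Finset.inter_subset_inter_left (pairsIn_mono Finset.subset_union_left)
  have hsdiff : G ∩ newPairs S T = (G ∩ pairsIn (S ∪ T)) \ (G ∩ pairsIn S) :=
    inf_sdiff_distrib_left _ _ _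
  rw [edgesIn_eq_card_inter_pairsIn hG, edgesIn_eq_card_inter_pairsIn hG, hsdiff,
    Finset.cast_card_sdiff hsub]

end Edges

section RandomGraph

open scoped unitInterval

variable {n : ℕ}

lemma PrGnp_eq_setBernoulli_real (p : I) (P : Finset (Sym2 (Fin n)) → Prop) :
    PrGnp n p P
      = setBer((completeEdges n : Set (Sym2 (Fin n))), p).real
        {s | ∃ G ⊆ completeEdges n, P G ∧ ↑G = s} := by
  classical
  have hevent : {s : Set (Sym2 (Fin n)) | ∃ G ⊆ completeEdges n, P G ∧ ↑G = s}
      = {G ∈ (completeEdges n).powerset | P G}.map ⟨SetLike.coe, Finset.coe_injective⟩ := by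
    ext s
    simp [and_assoc]
  rw [hevent, ← sum_measureReal_singleton, Finset.sum_map, PrGnp, Finset.sum_filter]
  refine Finset.sum_congr rfl fun G hG => ?_
  have hG := Finset.mem_powerset.1 hG
  congr 1
  rw [Function.Embedding.coeFn_mk,
    setBernoulli_real_singleton p (by exact_mod_cast hG) (Finset.finite_toSet _),
    ← Finset.coe_sdiff, Set.ncard_coe_finset, Set.ncard_coe_finset, Finset.card_sdiff_of_subset hG]

lemma one_sub_setBernoulli_real_le_PrGnp (p : I) {P : Finset (Sym2 (Fin n)) → Prop}
    {bad : Set (Set (Sym2 (Fin n)))} (hP : ∀ G ⊆ completeEdges n, ↑G ∉ bad → P G) :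
    1 - setBer((completeEdges n : Set (Sym2 (Fin n))), p).real bad ≤ PrGnp n p P := by
  rw [PrGnp_eq_setBernoulli_real, ← probReal_compl_eq_one_sub (Set.toFinite bad).measurableSet]
  refine ENNReal.toReal_mono (measure_ne_top _ _) (measure_mono_ae ?_)
  filter_upwards [setBernoulli_ae_subset] with s hs hbad
  lift s to Finset (Sym2 (Fin n)) using s.toFinite
  have hs : s ⊆ completeEdges n := by exact_mod_cast hs
  exact ⟨s, hs, hP s hs hbad, rfl⟩

lemma Pru_eq_occurrences_div_card {G : Finset (Sym2 (Fin n))} (hG : G ⊆ completeEdges n)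
    (S : Finset (Fin n)) (𝒯 : Finset (Finset (Fin n))) (A : Set ℝ) :
    Pru 𝒯 (fun T => (edgesIn G (S ∪ T) : ℝ) - edgesIn G S ∈ A)
      = occurrences (fun T : 𝒯 => {s : Set (Sym2 (Fin n)) |
          (s ∩ newPairs S T).ncard ∈ Nat.cast ⁻¹' A}) G / Fintype.card 𝒯 := by
  classical
  rw [Pru, occurrences_eq_card, Fintype.card_coe]
  congr 2
  simp only [edgesIn_union_sub_edgesIn hG, Set.mem_ofPred_eq, ← Finset.coe_inter,
    Set.ncard_coe_finset, Set.mem_preimage]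
  rw [Finset.univ_eq_attach,
    Finset.filter_attach (fun T => ((G ∩ newPairs S T).card : ℝ) ∈ A), Finset.card_map,
    Finset.card_attach]

lemma one_sub_exp_le_PrGnp_abs_Pru_sub_binomPr_le (p : I) {S : Finset (Fin n)}
    {𝒯 : Finset (Finset (Fin n))} (h𝒯 : 𝒯.Nonempty)
    (hdisj : (𝒯 : Set (Finset (Fin n))).Pairwise Disjoint) {ν : ℕ}
    (hν : ∀ T ∈ 𝒯, (newPairs S T).card = ν) (A : Set ℝ) {y w C : ℝ} (hy : 2 ≤ y)
    (hmean : 𝒯.card * binomPr ν p (fun j => (j : ℝ) ∈ A) ≤ C * y ^ 2) (hw : 4 * C + 1 ≤ w) :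
    1 - Real.exp (-w) ≤ PrGnp n p fun G =>
      |Pru 𝒯 (fun T => (edgesIn G (S ∪ T) : ℝ) - edgesIn G S ∈ A)
          - binomPr ν p (fun j => (j : ℝ) ∈ A)|
        ≤ if binomPr ν p (fun j => (j : ℝ) ∈ A) ≤ Real.exp (-w) / 𝒯.card
          then Real.exp (-w) / 𝒯.card else y * w / 𝒯.card := by
  have : Nonempty 𝒯 := h𝒯.to_subtype
  rw [← Fintype.card_coe 𝒯] at hmean ⊢
  set B : 𝒯 → Set (Sym2 (Fin n)) := fun T => newPairs S T
  have hB : Pairwise (Function.onFun Disjoint B) := fun T U hTU => Finset.disjoint_coe.2 <|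
    disjoint_newPairs <| hdisj T.2 U.2 <| Subtype.coe_ne_coe.2 hTU
  have hprob (T : 𝒯) : setBer((completeEdges n : Set (Sym2 (Fin n))), p).real
      {s | (s ∩ B T).ncard ∈ Nat.cast ⁻¹' A} = binomPr ν p (fun j => (j : ℝ) ∈ A) := by
    rw [setBernoulli_real_ncard_inter_mem p _ (Finset.finite_toSet _)
      (Finset.coe_subset.2 (newPairs_subset_completeEdges S T)), Set.ncard_coe_finset, hν T T.2,
      binomPr_eq_binomial_real]
    rfl
  have hconc := measureReal_ite_lt_abs_occurrences_div_card_sub_le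
    (fun T => measurable_ncard_inter (B T) .of_discrete)
    (iIndepSet_ncard_inter_mem_setBernoulli p _ hB) hprob hy hmean hw
  refine (sub_le_sub_left hconc 1).trans
    (one_sub_setBernoulli_real_le_PrGnp p fun G hG hgood => ?_)
  rw [Pru_eq_occurrences_div_card hG]
  exact not_lt.1 hgood

end RandomGraph

section MeanBound

open scoped unitInterval

lemma div_mul_div_sqrt_le {x t a c V β : ℝ} (hx : 0 < x) (ht : 0 < t) (hc : 0 < c)
    (ha : a ≤ t ^ ((3 : ℝ) / 2) * x ^ (2 * β - 1 / 2)) (hV : c * (x * t) ≤ V) :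
    x / t * (a / √V) ≤ 1 / √c * (x ^ β) ^ 2 := by
  have htpow : t ^ ((3 : ℝ) / 2) = t * √t := by
    rw [Real.sqrt_eq_rpow, ← Real.rpow_one_add' ht.le (by norm_num)]
    norm_num
  have hxpow : x * x ^ (2 * β - 1 / 2) = (x ^ β) ^ 2 * √x := by
    rw [Real.sqrt_eq_rpow, ← Real.rpow_mul_natCast hx.le, ← Real.rpow_add hx, mul_comm,
      ← Real.rpow_add_one hx.ne']
    congr 1
    push_cast
    ring
  calc x / t * (a / √V)
      ≤ x / t * (t * √t * x ^ (2 * β - 1 / 2) / √(c * (x * t))) := by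
        rw [← htpow]
        gcongr
    _ = x * x ^ (2 * β - 1 / 2) / (√c * √x) := by
        rw [Real.sqrt_mul hc.le, Real.sqrt_mul hx.le]
        field_simp
    _ = 1 / √c * (x ^ β) ^ 2 := by
        rw [hxpow]
        field_simp

variable {δ β p : ℝ} {n k t : ℕ}

lemma cube_div_two_mul_le_variance (hδ : 0 < δ) (hp : δ ≤ p) (hp' : p ≤ 1 - δ)
    (hk : δ * n ≤ k) (htk : t ≤ k / 2) :
    δ ^ 3 / 2 * (n * t) ≤ (((k - t) * t + t * (t - 1) / 2 + 1 : ℕ) : ℝ) * p * (1 - p) := by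
  have hp0 : 0 ≤ p := by linarith
  have hp1 : 0 ≤ 1 - p := by linarith
  have hp'' : δ ≤ 1 - p := by linarith
  have hcount : (k : ℝ) / 2 * t ≤ (((k - t) * t + t * (t - 1) / 2 + 1 : ℕ) : ℝ) := by
    have hhalf : (k : ℝ) / 2 ≤ (k - t : ℕ) := by
      rw [div_le_iff₀ two_pos]
      exact_mod_cast (by omega : k ≤ (k - t) * 2)
    refine (mul_le_mul_of_nonneg_right hhalf t.cast_nonneg).trans ?_
    exact_mod_cast (by omega : (k - t) * t ≤ (k - t) * t + t * (t - 1) / 2 + 1)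
  calc δ ^ 3 / 2 * (n * t) = δ * n / 2 * t * δ * δ := by ring
    _ ≤ k / 2 * t * p * (1 - p) := by gcongr
    _ ≤ (((k - t) * t + t * (t - 1) / 2 + 1 : ℕ) : ℝ) * p * (1 - p) := by gcongr

lemma mul_binomPr_Ico_le (hδ : 0 < δ) (hp : δ ≤ p) (hp' : p ≤ 1 - δ) (hn : 0 < n)
    (hk : δ * n ≤ k) (hkn : k ≤ n) (ht : 0 < t) (htk : t ≤ k / 2) {a : ℕ}
    (ha : (a : ℝ) ≤ (t : ℝ) ^ ((3 : ℝ) / 2) * (n : ℝ) ^ (2 * β - 1 / 2)) (z : ℝ) :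
    (((n - k + t) / t : ℕ) : ℝ) * binomPr ((k - t) * t + t * (t - 1) / 2) p
      (fun j => (j : ℝ) ∈ Set.Ico z (z + a)) ≤ 1 / √(δ ^ 3 / 2) * ((n : ℝ) ^ β) ^ 2 := by
  lift p to I using ⟨by linarith, by linarith⟩
  have hm : (((n - k + t) / t : ℕ) : ℝ) ≤ n / t := by
    refine Nat.cast_div_le.trans ?_
    gcongr
    omega
  have hbinom : Bin((k - t) * t + t * (t - 1) / 2, p).real (Nat.cast ⁻¹' Set.Ico z (z + a)) ≤
      a / √(((((k - t) * t + t * (t - 1) / 2) + 1 : ℕ) : ℝ) * p * (1 - p)) :=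
    binomial_real_preimage_Ico_le _ (Subtype.coe_lt_coe.1 (hδ.trans_le hp))
      (Subtype.coe_lt_coe.1 (hp'.trans_lt (sub_lt_self 1 hδ))) z a
  rw [binomPr_eq_binomial_real]
  refine (mul_le_mul hm hbinom measureReal_nonneg (by positivity)).trans ?_
  exact div_mul_div_sqrt_le (by positivity) (by positivity) (by positivity) ha
    (cube_div_two_mul_le_variance hδ hp hp' hk htk)

end MeanBound

/-- Lemma 3.3: `T` from a disjoint family.
Fix `δ, β, ε > 0`. There is `n₀` such that for all `n ≥ n₀`, `p ∈ [δ, 1-δ]`, `k` with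
`k/n ∈ [δ, 1-δ]`, positive integers `a, t` with `t ≤ k/2` and `a ≤ t^(3/2)·n^(2β-1/2)`,
any fixed `(k-t)`-set `S'`, any family `𝒯` of `m = ⌊(n-k+t)/t⌋` pairwise disjoint `t`-sets
in `[n]∖S'`, and any interval `A = [z, z+a)`: with probability at least `1 - e^(-n^ε)` over
`G_{n,p}`, `|P_T(e(S'∪T) - e(S') ∈ A) - P(Y ∈ A)| ≤ Δ_A`. -/
theorem stmt_14 (δ β ε : ℝ) (hδ : 0 < δ) (hβ : 0 < β) (hε : 0 < ε) :
    ∃ n₀ : ℕ, ∀ n ≥ n₀, ∀ p : ℝ, δ ≤ p → p ≤ 1 - δ →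
      ∀ k : ℕ, δ ≤ (k:ℝ)/n → (k:ℝ)/n ≤ 1 - δ →
      ∀ a t : ℕ, 0 < a → 0 < t → t ≤ k / 2 →
      (a : ℝ) ≤ (t:ℝ) ^ ((3:ℝ)/2) * (n:ℝ) ^ (2*β - 1/2) →
      ∀ S' : Finset (Fin n), S'.card = k - t →
      ∀ 𝒯 : Finset (Finset (Fin n)),
        𝒯.card = (n - k + t) / t →
        (∀ T ∈ 𝒯, T.card = t ∧ T ⊆ S'ᶜ) →
        (𝒯 : Set (Finset (Fin n))).Pairwise Disjoint →
      ∀ z : ℝ,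
        let m : ℕ := (n - k + t) / t
        let PY : ℝ := binomPr ((k - t) * t + t * (t - 1) / 2) p
          (fun j => (j:ℝ) ∈ Set.Ico z (z + a))
        let ΔA : ℝ := if PY ≤ Real.exp (-(n:ℝ)^ε) / m then Real.exp (-(n:ℝ)^ε) / m
          else (n:ℝ)^(β+ε) / m
        PrGnp n p (fun G =>
            |Pru 𝒯 (fun T => ((edgesIn G (S' ∪ T) : ℝ) - (edgesIn G S' : ℝ)) ∈ Set.Ico z (z + a))
              - PY| ≤ ΔA)
          ≥ 1 - Real.exp (-(n:ℝ)^ε) := by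
  set C : ℝ := 1 / √(δ ^ 3 / 2)
  have hlarge : ∀ᶠ n : ℕ in Filter.atTop, 0 < n ∧ 2 ≤ (n : ℝ) ^ β ∧ 4 * C + 1 ≤ (n : ℝ) ^ ε :=
    (Filter.eventually_gt_atTop 0).and <|
      (((tendsto_rpow_atTop hβ).comp tendsto_natCast_atTop_atTop).eventually_ge_atTop 2).and <|
        ((tendsto_rpow_atTop hε).comp tendsto_natCast_atTop_atTop).eventually_ge_atTop _
  obtain ⟨n₀, hn₀⟩ := Filter.eventually_atTop.1 hlarge
  refine ⟨n₀, fun n hn p hp hp' k hk hk' a t _ ht htk ha S' hS' 𝒯 h𝒯 hT hdisj z => ?_⟩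
  obtain ⟨hn0, hnβ, hnε⟩ := hn₀ n hn
  intro m PY ΔA
  have hn0' : (0 : ℝ) < n := Nat.cast_pos.2 hn0
  have hkn : k ≤ n := by
    exact_mod_cast ((div_le_iff₀ hn0').1 (hk'.trans (sub_le_self 1 hδ.le))).trans_eq (one_mul _)
  have hmean : m * PY ≤ C * ((n : ℝ) ^ β) ^ 2 :=
    mul_binomPr_Ico_le hδ hp hp' hn0 ((le_div_iff₀ hn0').1 hk) hkn ht htk ha z
  have h𝒯ne : 𝒯.Nonempty := Finset.card_pos.1 (h𝒯 ▸ Nat.div_pos (Nat.le_add_left t _) ht)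
  have hnew : ∀ T ∈ 𝒯, (newPairs S' T).card = (k - t) * t + t * (t - 1) / 2 := fun T hTm => by
    rw [card_newPairs (Finset.subset_compl_iff_disjoint_left.1 (hT T hTm).2), hS', (hT T hTm).1]
  lift p to unitInterval using ⟨by linarith, by linarith⟩
  have hconc := one_sub_exp_le_PrGnp_abs_Pru_sub_binomPr_le p h𝒯ne hdisj hnew
    (Set.Ico z (z + a)) hnβ (by rwa [h𝒯]) hnε
  rwa [h𝒯, ← Real.rpow_add hn0'] at hconc
end
end
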